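/- arXiv:0711.4457 — 3 statements merged into one kernel-verified Lean document; each statement's English description precedes it below -/
import Mathlib

section
/- Let α ∈ (0,2) and let f, g ∈ L^α(S, μ) be nonzero and satisfy Assumption (A1) with constant ε₁. Then ∫_ℝ ∫_ℝ |U(u,v)| du dv ≤ C [f,g]₂, where the constant C depends only on ε₁, α, ‖f‖_α and ‖g‖_α. (Paper's Lemma 3.4.) -/
open MeasureTheory Real Set Filter
open scoped ENNReal Topology

noncomputable def nrm (α : ℝ) {S : Type*} [MeasurableSpace S] (μ : Measure S) (f : S → ℝ) : ℝ :=
  (∫ s, |f s| ^ α ∂μ) ^ (1 / α)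

noncomputable def dep2 (α : ℝ) {S : Type*} [MeasurableSpace S] (μ : Measure S) (f g : S → ℝ) : ℝ :=
  ∫ s, |f s * g s| ^ (α / 2) ∂μ

noncomputable def dep1s (α : ℝ) {S : Type*} [MeasurableSpace S] (μ : Measure S) (f g : S → ℝ) : ℝ :=
  ∫ s, |f s| ^ (α - 1) * |g s| ∂μ

noncomputable def dep1 (α : ℝ) {S : Type*} [MeasurableSpace S] (μ : Measure S) (f g : S → ℝ) : ℝ :=
  dep1s α μ f g + dep1s α μ g f

/-- `f ∈ L^α(S, μ)`. -/
def MemLalpha (α : ℝ) {S : Type*} [MeasurableSpace S] (μ : Measure S) (f : S → ℝ) : Prop :=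
  AEStronglyMeasurable f μ ∧ Integrable (fun s => |f s| ^ α) μ

/-- Assumption (A1) with constant ε₁. -/
def A1 (α ε₁ : ℝ) {S : Type*} [MeasurableSpace S] (μ : Measure S) (f g : S → ℝ) : Prop :=
  nrm α μ f ^ (α / 2) * nrm α μ g ^ (α / 2) - dep2 α μ f g
    ≥ ε₁ * (nrm α μ f ^ (α / 2) * nrm α μ g ^ (α / 2))

/-- Assumption (A2) with constant ε₂. -/
def A2 (α ε₂ : ℝ) {S : Type*} [MeasurableSpace S] (μ : Measure S) (f g : S → ℝ) : Prop :=
  ∀ u v : ℝ, nrm α μ (fun s => u * f s + v * g s) ^ α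
    ≥ ε₂ * (|u| ^ α * nrm α μ f ^ α + |v| ^ α * nrm α μ g ^ α)

noncomputable def Ufun (α : ℝ) {S : Type*} [MeasurableSpace S] (μ : Measure S)
    (f g : S → ℝ) (u v : ℝ) : ℝ :=
  Real.exp (-(nrm α μ (fun s => u * f s + v * g s) ^ α)) -
    Real.exp (-(nrm α μ (fun s => u * f s) ^ α) - nrm α μ (fun s => v * g s) ^ α)

/-- signed power `a^⟨p⟩ = sign(a)|a|^p`. -/
noncomputable def spow (a p : ℝ) : ℝ := Real.sign a * |a| ^ p

noncomputable def D1 (α : ℝ) {S : Type*} [MeasurableSpace S] (μ : Measure S)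
    (f g : S → ℝ) (u v : ℝ) : ℝ :=
  -α * (∫ s, spow (u * f s + v * g s) (α - 1) * f s ∂μ) *
      Real.exp (-(nrm α μ (fun s => u * f s + v * g s) ^ α)) +
    α * (∫ s, spow (u * f s) (α - 1) * f s ∂μ) *
      Real.exp (-(nrm α μ (fun s => u * f s) ^ α) - nrm α μ (fun s => v * g s) ^ α)

noncomputable def D2 (α : ℝ) {S : Type*} [MeasurableSpace S] (μ : Measure S)
    (f g : S → ℝ) (u v : ℝ) : ℝ :=
  -(α * (α - 1)) * (∫ s, (if f s = 0 ∨ g s = 0 then (0:ℝ) else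
        |u * f s + v * g s| ^ (α - 2) * (f s * g s)) ∂μ) *
      Real.exp (-(nrm α μ (fun s => u * f s + v * g s) ^ α)) +
    α ^ 2 * (∫ s, spow (u * f s + v * g s) (α - 1) * f s ∂μ) *
      (∫ s, spow (u * f s + v * g s) (α - 1) * g s ∂μ) *
      Real.exp (-(nrm α μ (fun s => u * f s + v * g s) ^ α)) -
    α ^ 2 * (∫ s, spow (u * f s) (α - 1) * f s ∂μ) *
      (∫ s, spow (v * g s) (α - 1) * g s ∂μ) *
      Real.exp (-(nrm α μ (fun s => u * f s) ^ α) - nrm α μ (fun s => v * g s) ^ α)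

/-- `(ξ, η)` is jointly SαS with spectral pair `(f, g)`. -/
def JointSAS (α : ℝ) {S : Type*} [MeasurableSpace S] (μ : Measure S) (f g : S → ℝ)
    {Ω : Type*} [MeasurableSpace Ω] (P : Measure Ω) (ξ η : Ω → ℝ) : Prop :=
  ∀ u v : ℝ, (∫ ω, Complex.exp (Complex.I * ((u * ξ ω + v * η ω : ℝ) : ℂ)) ∂P)
    = Complex.exp (-((nrm α μ (fun s => u * f s + v * g s) ^ α : ℝ) : ℂ))

lemma aux_pt (α : ℝ) (hα0 : 0 < α) (hα2 : α < 2) (x y : ℝ) :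
    |(|x + y| ^ α - |x| ^ α - |y| ^ α)| ≤ 2 * |x * y| ^ (α / 2) := by
  have sq : ∀ z : ℝ, |z| ^ α = (|z| ^ (α / 2)) ^ 2 := by
    intro z
    rw [← Real.rpow_natCast, ← Real.rpow_mul (abs_nonneg z)]
    congr 1
    push_cast
    ring
  have tri : ∀ a b : ℝ, |a + b| ^ (α / 2) ≤ |a| ^ (α / 2) + |b| ^ (α / 2) := by
    intro a b
    calc |a + b| ^ (α / 2) ≤ (|a| + |b|) ^ (α / 2) :=
          Real.rpow_le_rpow (abs_nonneg _) (abs_add_le a b) (by linarith)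
      _ ≤ _ := Real.rpow_add_le_add_rpow (abs_nonneg a) (abs_nonneg b) (by linarith) (by linarith)
  have h1 := tri x y
  have h2 := tri (x + y) (-y)
  have h3 := tri (x + y) (-x)
  rw [abs_neg, add_neg_cancel_right] at h2
  rw [abs_neg, show x + y + -x = y by ring] at h3
  rw [sq, sq x, sq y, abs_mul, Real.mul_rpow (abs_nonneg x) (abs_nonneg y)]
  have p1 : 0 ≤ |x + y| ^ (α / 2) := by positivity
  have p2 : 0 ≤ |x| ^ (α / 2) := by positivity
  have p3 : 0 ≤ |y| ^ (α / 2) := by positivity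
  generalize |x + y| ^ (α / 2) = c at *
  generalize |x| ^ (α / 2) = a at *
  generalize |y| ^ (α / 2) = b at *
  rw [abs_le]
  constructor
  · have : (a - b) ^ 2 ≤ c ^ 2 := sq_le_sq' (by linarith) (by linarith) |>.trans le_rfl
    nlinarith
  · nlinarith

lemma aux_exp (m x y : ℝ) (hx : m ≤ x) (hy : m ≤ y) :
    |Real.exp (-x) - Real.exp (-y)| ≤ |x - y| * Real.exp (-m) := by
  wlog h : x ≤ y generalizing x y with H
  · rw [abs_sub_comm, abs_sub_comm x y]
    exact H y x hy hx (le_of_not_ge h)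
  have h1 : Real.exp (-y) ≤ Real.exp (-x) := Real.exp_le_exp.2 (by linarith)
  rw [abs_of_nonneg (by linarith), abs_sub_comm, abs_of_nonneg (by linarith : 0 ≤ y - x)]
  have h2 : Real.exp (-y) = Real.exp (-x) * Real.exp (-(y - x)) := by
    rw [← Real.exp_add]; congr 1; ring
  have h3 := Real.add_one_le_exp (-(y - x))
  have h4 : Real.exp (-x) ≤ Real.exp (-m) := Real.exp_le_exp.2 (by linarith)
  have h5 := Real.exp_pos (-x)
  calc Real.exp (-x) - Real.exp (-y) = Real.exp (-x) * (1 - Real.exp (-(y - x))) := by rw [h2]; ring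
    _ ≤ Real.exp (-x) * (y - x) :=
        mul_le_mul_of_nonneg_left (by linarith) h5.le
    _ ≤ Real.exp (-m) * (y - x) := mul_le_mul_of_nonneg_right h4 (by linarith)
    _ = _ := by ring

lemma aux_int (α b : ℝ) (hα0 : 0 < α) (hb : 0 < b) :
    Integrable (fun u : ℝ => |u| ^ (α / 2) * Real.exp (-b * |u| ^ α)) := by
  have h := integrableOn_rpow_mul_exp_neg_mul_rpow (s := α / 2) (p := α) (b := b)
    (by linarith) hα0 hb
  have h0 : IntegrableOn (fun u : ℝ => |u| ^ (α / 2) * Real.exp (-b * |u| ^ α)) (Ioi 0) := by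
    refine h.congr_fun (fun x hx => ?_) measurableSet_Ioi
    simp only [abs_of_pos (mem_Ioi.1 hx)]
  have h1 : IntegrableOn (fun u : ℝ => |u| ^ (α / 2) * Real.exp (-b * |u| ^ α)) (Iic 0) := by
    have h2 := (integrableOn_Ici_iff_integrableOn_Ioi).2 h0
    have h3 := IntegrableOn.comp_neg_Iic (c := 0) (f := fun u : ℝ => |u| ^ (α / 2) * Real.exp (-b * |u| ^ α))
      (by rw [neg_zero]; exact h2)
    simp only [abs_neg] at h3
    exact h3
  rw [← integrableOn_univ, ← Iic_union_Ioi (a := (0 : ℝ))]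
  exact h1.union h0

lemma aux_nrm (α : ℝ) (hα0 : 0 < α) {S : Type*} [MeasurableSpace S] (μ : Measure S)
    (f : S → ℝ) : nrm α μ f ^ α = ∫ s, |f s| ^ α ∂μ := by
  unfold nrm
  rw [← Real.rpow_mul (integral_nonneg fun s => by positivity), one_div_mul_cancel hα0.ne',
    Real.rpow_one]

lemma aux_nrm_smul (α : ℝ) (hα0 : 0 < α) {S : Type*} [MeasurableSpace S] (μ : Measure S)
    (f : S → ℝ) (u : ℝ) :
    nrm α μ (fun s => u * f s) ^ α = |u| ^ α * nrm α μ f ^ α := by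
  rw [aux_nrm α hα0, aux_nrm α hα0, ← integral_const_mul]
  congr 1
  ext s
  rw [abs_mul, Real.mul_rpow (abs_nonneg _) (abs_nonneg _)]

lemma aux_prod_int (α : ℝ) (hα0 : 0 < α) {S : Type*} [MeasurableSpace S]
    (μ : Measure S) (f g : S → ℝ) (hf : MemLalpha α μ f) (hg : MemLalpha α μ g) :
    Integrable (fun s => |f s * g s| ^ (α / 2)) μ := by
  refine (hf.2.add hg.2).mono' ?_ ?_
  · have := (hf.1.mul hg.1).aemeasurable
    exact (this.abs.pow_const _).aestronglyMeasurable
  · refine Eventually.of_forall fun s => ?_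
    have sq : ∀ z : ℝ, |z| ^ α = (|z| ^ (α / 2)) ^ 2 := by
      intro z
      rw [← Real.rpow_natCast, ← Real.rpow_mul (abs_nonneg z)]
      congr 1
      push_cast
      ring
    rw [Real.norm_of_nonneg (by positivity), Pi.add_apply, sq, sq, abs_mul,
      Real.mul_rpow (abs_nonneg _) (abs_nonneg _)]
    nlinarith [sq_nonneg (|f s| ^ (α / 2) - |g s| ^ (α / 2)), sq_nonneg (|f s| ^ (α / 2)),
      sq_nonneg (|g s| ^ (α / 2))]

lemma aux_smul_mem (α : ℝ) {S : Type*} [MeasurableSpace S]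
    (μ : Measure S) (f : S → ℝ) (hf : MemLalpha α μ f) (u : ℝ) :
    MemLalpha α μ (fun s => u * f s) := by
  refine ⟨hf.1.const_mul u, ?_⟩
  have := hf.2.const_mul (|u| ^ α)
  refine this.congr (Eventually.of_forall fun s => ?_)
  simp only [abs_mul]
  rw [Real.mul_rpow (abs_nonneg _) (abs_nonneg _)]

lemma aux_add (α : ℝ) (hα0 : 0 < α) (hα2 : α < 2) {S : Type*} [MeasurableSpace S]
    (μ : Measure S) (f g : S → ℝ) (hf : MemLalpha α μ f) (hg : MemLalpha α μ g) :
    |nrm α μ (fun s => f s + g s) ^ α - nrm α μ f ^ α - nrm α μ g ^ α| ≤ 2 * dep2 α μ f g := by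
  have hp := (aux_prod_int α hα0 μ f g hf hg).const_mul 2
  have hd : Integrable (fun s => |f s + g s| ^ α) μ := by
    refine ((hf.2.add hg.2).add hp).mono' ?_ ?_
    · exact ((hf.1.add hg.1).aemeasurable.abs.pow_const _).aestronglyMeasurable
    · refine Eventually.of_forall fun s => ?_
      have := (abs_le.1 (aux_pt α hα0 hα2 (f s) (g s))).2
      rw [Real.norm_of_nonneg (by positivity)]
      simp only [Pi.add_apply]
      linarith
  rw [aux_nrm α hα0, aux_nrm α hα0, aux_nrm α hα0, ← integral_sub hd hf.2,
    ← integral_sub (f := fun s => |f s + g s| ^ α - |f s| ^ α) (hd.sub hf.2) hg.2]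
  unfold dep2
  rw [← integral_const_mul]
  refine (abs_integral_le_integral_abs).trans ?_
  exact integral_mono ((hd.sub hf.2).sub hg.2).abs hp fun s => aux_pt α hα0 hα2 (f s) (g s)

lemma aux_dep2 (α : ℝ) {S : Type*} [MeasurableSpace S]
    (μ : Measure S) (f g : S → ℝ) (u v : ℝ) :
    dep2 α μ (fun s => u * f s) (fun s => v * g s)
      = |u| ^ (α / 2) * |v| ^ (α / 2) * dep2 α μ f g := by
  unfold dep2
  rw [← integral_const_mul]
  congr 1
  ext s
  rw [show u * f s * (v * g s) = u * v * (f s * g s) by ring, abs_mul, abs_mul u v,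
    Real.mul_rpow (by positivity) (abs_nonneg _), Real.mul_rpow (abs_nonneg _) (abs_nonneg _)]

lemma aux_U (α ε₁ : ℝ) (hα0 : 0 < α) (hα2 : α < 2) (hε₁ : 0 < ε₁) {S : Type*} [MeasurableSpace S]
    (μ : Measure S) (f g : S → ℝ) (hf : MemLalpha α μ f) (hg : MemLalpha α μ g)
    (hnf : 0 < nrm α μ f) (hng : 0 < nrm α μ g) (hA : A1 α ε₁ μ f g) (u v : ℝ) :
    |Ufun α μ f g u v| ≤ 2 * dep2 α μ f g *
      ((|u| ^ (α / 2) * Real.exp (-(ε₁ * nrm α μ f ^ α) * |u| ^ α)) *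
        (|v| ^ (α / 2) * Real.exp (-(ε₁ * nrm α μ g ^ α) * |v| ^ α))) := by
  have hd0 : 0 ≤ dep2 α μ f g := integral_nonneg fun s => by positivity
  have hadd := aux_add α hα0 hα2 μ _ _ (aux_smul_mem α μ f hf u) (aux_smul_mem α μ g hg v)
  rw [aux_dep2, aux_nrm_smul α hα0, aux_nrm_smul α hα0] at hadd
  unfold A1 at hA
  unfold Ufun
  rw [aux_nrm_smul α hα0, aux_nrm_smul α hα0]
  have sq : ∀ z : ℝ, 0 ≤ z → z ^ α = (z ^ (α / 2)) ^ 2 := by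
    intro z hz
    rw [← Real.rpow_natCast, ← Real.rpow_mul hz]
    congr 1
    push_cast
    ring
  have hF : 0 < nrm α μ f ^ (α / 2) := by positivity
  have hG : 0 < nrm α μ g ^ (α / 2) := by positivity
  have hu : 0 ≤ |u| ^ (α / 2) := by positivity
  have hv : 0 ≤ |v| ^ (α / 2) := by positivity
  rw [sq _ hnf.le, sq _ hng.le, sq _ (abs_nonneg u), sq _ (abs_nonneg v)] at *
  generalize nrm α μ f ^ (α / 2) = F at *
  generalize nrm α μ g ^ (α / 2) = G at *
  generalize |u| ^ (α / 2) = a at *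
  generalize |v| ^ (α / 2) = b at *
  generalize dep2 α μ f g = d at *
  generalize nrm α μ (fun s => u * f s + v * g s) ^ α = x at *
  have hε1 : ε₁ ≤ 1 := by
    by_contra h
    push Not at h
    nlinarith [mul_pos hF hG]
  have hdle : d ≤ (1 - ε₁) * (F * G) := by linarith
  have hy : ε₁ * (a ^ 2 * F ^ 2 + b ^ 2 * G ^ 2) ≤ a ^ 2 * F ^ 2 + b ^ 2 * G ^ 2 := by
    have : 0 ≤ a ^ 2 * F ^ 2 + b ^ 2 * G ^ 2 := by positivity
    nlinarith
  have hx : ε₁ * (a ^ 2 * F ^ 2 + b ^ 2 * G ^ 2) ≤ x := by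
    have h1 := (abs_le.1 hadd).1
    have h2 : a * b * d ≤ a * b * ((1 - ε₁) * (F * G)) := by gcongr
    have h3 : 0 ≤ (1 - ε₁) * (a * F - b * G) ^ 2 := mul_nonneg (by linarith) (sq_nonneg _)
    nlinarith
  have hE := aux_exp _ _ _ hx hy
  calc |Real.exp (-x) - Real.exp (-(a ^ 2 * F ^ 2) - b ^ 2 * G ^ 2)|
      = |Real.exp (-x) - Real.exp (-(a ^ 2 * F ^ 2 + b ^ 2 * G ^ 2))| := by
        rw [neg_add, ← sub_eq_add_neg]
    _ ≤ _ := hE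
    _ ≤ (2 * (a * b * d)) * Real.exp (-(ε₁ * (a ^ 2 * F ^ 2 + b ^ 2 * G ^ 2))) := by
        gcongr
        rw [← sub_sub]
        exact hadd
    _ = _ := by
        rw [show -(ε₁ * (a ^ 2 * F ^ 2 + b ^ 2 * G ^ 2))
          = -(ε₁ * F ^ 2) * a ^ 2 + -(ε₁ * G ^ 2) * b ^ 2 by ring, Real.exp_add]
        ring

/-- Paper's Lemma 3.4. -/
theorem stmt9 (α ε₁ nf ng : ℝ) (hα0 : 0 < α) (hα2 : α < 2) (hε₁ : 0 < ε₁)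
    (hnf : 0 < nf) (hng : 0 < ng) :
    ∃ C > (0:ℝ), ∀ (S : Type) [MeasurableSpace S] (μ : Measure S) [SigmaFinite μ]
      (f g : S → ℝ), MemLalpha α μ f → MemLalpha α μ g →
      nrm α μ f = nf → nrm α μ g = ng → A1 α ε₁ μ f g →
      ∫⁻ u : ℝ, ∫⁻ v : ℝ, ENNReal.ofReal |Ufun α μ f g u v|
        ≤ ENNReal.ofReal (C * dep2 α μ f g) := by
  have i1 := aux_int α (ε₁ * nf ^ α) hα0 (by positivity)
  have i2 := aux_int α (ε₁ * ng ^ α) hα0 (by positivity)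
  set P : ℝ → ℝ := fun u : ℝ => |u| ^ (α / 2) * Real.exp (-(ε₁ * nf ^ α) * |u| ^ α) with hP
  set Q : ℝ → ℝ := fun u : ℝ => |u| ^ (α / 2) * Real.exp (-(ε₁ * ng ^ α) * |u| ^ α) with hQ
  have hP0 : ∀ u, 0 ≤ P u := fun u => by positivity
  have hQ0 : ∀ u, 0 ≤ Q u := fun u => by positivity
  have hIP : 0 ≤ ∫ u, P u := integral_nonneg hP0
  have hIQ : 0 ≤ ∫ u, Q u := integral_nonneg hQ0
  refine ⟨2 * ((∫ u, P u) * ∫ u, Q u) + 1, by positivity, ?_⟩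
  intro S _ μ _ f g hf hg hf1 hg1 hA
  have hd0 : 0 ≤ dep2 α μ f g := integral_nonneg fun s => by positivity
  have key := aux_U α ε₁ hα0 hα2 hε₁ μ f g hf hg (hf1 ▸ hnf) (hg1 ▸ hng) hA
  rw [hf1, hg1] at key
  set d := dep2 α μ f g
  calc ∫⁻ u : ℝ, ∫⁻ v : ℝ, ENNReal.ofReal |Ufun α μ f g u v|
      ≤ ∫⁻ u : ℝ, ∫⁻ v : ℝ, ENNReal.ofReal (2 * d * P u) * ENNReal.ofReal (Q v) := by
        refine lintegral_mono fun u => lintegral_mono fun v => ?_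
        rw [← ENNReal.ofReal_mul (mul_nonneg (by positivity) (hP0 u))]
        refine ENNReal.ofReal_le_ofReal ((key u v).trans (le_of_eq ?_))
        simp only [hP, hQ]
        ring
    _ = ∫⁻ u : ℝ, ENNReal.ofReal (2 * d * (∫ v, Q v) * P u) := by
        refine lintegral_congr fun u => ?_
        rw [lintegral_const_mul' _ _ ENNReal.ofReal_ne_top,
          ← ofReal_integral_eq_lintegral_ofReal i2 (Eventually.of_forall hQ0),
          ← ENNReal.ofReal_mul (mul_nonneg (by positivity) (hP0 u))]
        congr 1
        ring
    _ = ENNReal.ofReal (2 * d * (∫ v, Q v) * ∫ u, P u) := by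
        rw [← ofReal_integral_eq_lintegral_ofReal (i1.const_mul _)
          (Eventually.of_forall fun u => mul_nonneg (by positivity) (hP0 u)), integral_const_mul]
    _ ≤ _ := by
        refine ENNReal.ofReal_le_ofReal ?_
        nlinarith
end

section
/- Let α ∈ (1,2) and let f, g ∈ L^α(S, μ) be nonzero and satisfy Assumptions (A1) and (A2) with constants ε₁, ε₂. Let b ≥ 1, β ∈ (0, α/2), and define F(u) := |u|^{−β} for |u| < 1/b and F(u) := b^{β−1}|u|^{−1} for |u| ≥ 1/b. Then ∫_ℝ ∫_ℝ |D₁(u,v)| F(u) du dv ≤ C b^{β−1} log(b+1) ([g,f]₁* + [f,g]₂) and ∫_ℝ ∫_ℝ |D₂(u,v)| F(u)F(v) du dv ≤ C b^{2β−α} ([f,g]₁ + [f,g]₂), where the constant C depends only on α, β, ε₁, ε₂, ‖f‖_α and ‖g‖_α. (Paper's Lemma 3.5.) -/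
open MeasureTheory Real Set Filter
open scoped ENNReal Topology

lemma abs_rpow_sub_rpow_le {p a b : ℝ} (hp0 : 0 ≤ p) (hp1 : p ≤ 1) (ha : 0 ≤ a) (hb : 0 ≤ b) :
    |a ^ p - b ^ p| ≤ |a - b| ^ p := by
  wlog h : b ≤ a generalizing a b
  · rw [abs_sub_comm, abs_sub_comm a b]
    exact this hb ha (le_of_not_ge h)
  rw [abs_of_nonneg (sub_nonneg.2 (Real.rpow_le_rpow hb h hp0)), abs_of_nonneg (sub_nonneg.2 h)]
  have := Real.rpow_add_le_add_rpow (sub_nonneg.2 h) hb hp0 hp1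
  rw [sub_add_cancel] at this
  linarith

lemma spow_sub_le {p : ℝ} (hp0 : 0 < p) (hp1 : p ≤ 1) (x y : ℝ) :
    |spow (x + y) p - spow x p| ≤ 2 * |y| ^ p := by
  have hy : 0 ≤ |y| ^ p := by positivity
  have key : ∀ a b : ℝ, |a - b| = |y| → |spow a p - spow b p| ≤ 2 * |y| ^ p := by
    intro a b hab
    have h1 : |a| ^ p ≤ |b| ^ p + |y| ^ p ∧ |b| ^ p ≤ |a| ^ p + |y| ^ p := by
      have := abs_rpow_sub_rpow_le hp0.le hp1 (abs_nonneg a) (abs_nonneg b)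
      have h2 : |(|a| - |b|)| ^ p ≤ |y| ^ p :=
        Real.rpow_le_rpow (abs_nonneg _) (hab ▸ abs_abs_sub_abs_le_abs_sub a b) hp0.le
      have := abs_le.1 (this.trans h2)
      constructor <;> linarith
    have h3 : |a| ≤ |y| → |a| ^ p ≤ |y| ^ p := fun h => Real.rpow_le_rpow (abs_nonneg _) h hp0.le
    have h4 : |b| ≤ |y| → |b| ^ p ≤ |y| ^ p := fun h => Real.rpow_le_rpow (abs_nonneg _) h hp0.le
    have ha : 0 ≤ |a| ^ p := by positivity
    have hb : 0 ≤ |b| ^ p := by positivity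
    unfold spow
    rcases lt_trichotomy a 0 with h | h | h <;> rcases lt_trichotomy b 0 with h' | h' | h'
    · rw [Real.sign_of_neg h, Real.sign_of_neg h']; rw [abs_le]; constructor <;> linarith
    · subst h'; simp only [Real.sign_zero, zero_mul, sub_zero] at *
      rw [Real.sign_of_neg h, ← hab, abs_mul, abs_of_nonneg ha]; norm_num; linarith
    · have e1 : |a| ≤ |y| := by rw [← hab, abs_of_neg h, abs_of_neg (by linarith)]; linarith
      have e2 : |b| ≤ |y| := by rw [← hab, abs_of_pos h', abs_of_neg (by linarith)]; linarith
      have := h3 e1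
      have := h4 e2
      rw [Real.sign_of_neg h, Real.sign_of_pos h']; rw [abs_le]; constructor <;> linarith
    · subst h; simp only [Real.sign_zero, zero_mul, zero_sub, abs_neg] at *
      rw [Real.sign_of_neg h', ← hab, abs_mul, abs_of_nonneg hb]; norm_num; linarith
    · subst h; subst h'; simp; positivity
    · subst h; simp only [Real.sign_zero, zero_mul, zero_sub, abs_neg] at *
      rw [Real.sign_of_pos h', ← hab, abs_mul, abs_of_nonneg hb]; norm_num; linarith
    · have e1 : |a| ≤ |y| := by rw [← hab, abs_of_pos h, abs_of_pos (by linarith)]; linarith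
      have e2 : |b| ≤ |y| := by rw [← hab, abs_of_neg h', abs_of_pos (by linarith)]; linarith
      have := h3 e1
      have := h4 e2
      rw [Real.sign_of_pos h, Real.sign_of_neg h']; rw [abs_le]; constructor <;> linarith
    · subst h'; simp only [Real.sign_zero, zero_mul, sub_zero] at *
      rw [Real.sign_of_pos h, ← hab, abs_mul, abs_of_nonneg ha]; norm_num; linarith
    · rw [Real.sign_of_pos h, Real.sign_of_pos h']; rw [abs_le]; constructor <;> linarith
  exact key _ _ (by rw [add_sub_cancel_left])

lemma abs_spow_le (a p : ℝ) : |spow a p| ≤ |a| ^ p := by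
  unfold spow
  rw [abs_mul, abs_of_nonneg (by positivity : 0 ≤ |a| ^ p)]
  have : |Real.sign a| ≤ 1 := by
    rcases Real.sign_apply_eq a with h | h | h <;> rw [h] <;> norm_num
  nlinarith [(by positivity : 0 ≤ |a| ^ p)]

lemma rpow_sub_le_mvt {α a b : ℝ} (hα : 1 ≤ α) (ha : 0 ≤ a) (hb : 0 ≤ b) :
    a ^ α - b ^ α ≤ α * a ^ (α - 1) * (a - b) := by
  rcases ha.eq_or_lt with h | h
  · subst h
    rw [Real.zero_rpow (by linarith)]
    rcases hα.eq_or_lt with h1 | h1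
    · subst h1; simp
    · rw [Real.zero_rpow (by linarith)]
      have : 0 ≤ b ^ α := by positivity
      linarith
  have h1 := one_add_mul_self_le_rpow_one_add (s := b / a - 1)
    (by linarith [div_nonneg hb ha]) hα
  rw [add_sub_cancel, Real.div_rpow hb ha] at h1
  have h2 : 0 < a ^ α := by positivity
  rw [le_div_iff₀ h2] at h1
  rw [Real.rpow_sub_one h.ne']
  have : (1 + α * (b / a - 1)) * a ^ α = a ^ α - α * (a ^ α / a) * (a - b) := by
    field_simp
    ring
  linarith

lemma abs_rpow_sub_le {α a b m : ℝ} (hα : 1 ≤ α) (ha : 0 ≤ a) (hb : 0 ≤ b) (ham : a ≤ m)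
    (hbm : b ≤ m) :
    |a ^ α - b ^ α| ≤ α * m ^ (α - 1) * |a - b| := by
  wlog h : b ≤ a generalizing a b
  · rw [abs_sub_comm, abs_sub_comm a b]
    exact this hb ha hbm ham (le_of_not_ge h)
  rw [abs_of_nonneg (sub_nonneg.2 (Real.rpow_le_rpow hb h (by linarith))),
    abs_of_nonneg (sub_nonneg.2 h)]
  refine (rpow_sub_le_mvt hα ha hb).trans ?_
  have : a ^ (α - 1) ≤ m ^ (α - 1) := Real.rpow_le_rpow ha ham (by linarith)
  have : 0 ≤ a - b := by linarith
  gcongr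

lemma abs_add_rpow_le {α : ℝ} (hα1 : 1 < α) (hα2 : α < 2) (x y : ℝ) :
    |(|x + y| ^ α - |x| ^ α - |y| ^ α)| ≤ 5 * |x * y| ^ (α / 2) := by
  wlog h : |y| ≤ |x| generalizing x y
  · rw [add_comm, mul_comm x y]
    have := this y x (le_of_not_ge h)
    convert this using 2; ring
  have hx := abs_nonneg x
  have hy := abs_nonneg y
  have e1 : |y| ^ α ≤ |x * y| ^ (α / 2) := by
    rw [abs_mul, Real.mul_rpow hx hy]
    have : |y| ^ α = |y| ^ (α / 2) * |y| ^ (α / 2) := by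
      rw [← Real.rpow_add_of_nonneg hy (by linarith) (by linarith)]; ring_nf
    rw [this]; gcongr
  have e2 : |x| ^ (α - 1) * |y| ≤ |x * y| ^ (α / 2) := by
    rw [abs_mul, Real.mul_rpow hx hy]
    have h1 : |y| = |y| ^ (1 - α / 2) * |y| ^ (α / 2) := by
      rw [← Real.rpow_add_of_nonneg hy (by linarith) (by linarith)]; simp
    have h2 : |x| ^ (α / 2) = |x| ^ (α - 1) * |x| ^ (1 - α / 2) := by
      rw [← Real.rpow_add_of_nonneg hx (by linarith) (by linarith)]; ring_nf
    have h3 : |y| ^ (1 - α / 2) ≤ |x| ^ (1 - α / 2) := Real.rpow_le_rpow hy h (by linarith)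
    calc |x| ^ (α - 1) * |y| = |x| ^ (α - 1) * (|y| ^ (1 - α / 2) * |y| ^ (α / 2)) := by rw [← h1]
      _ ≤ |x| ^ (α - 1) * (|x| ^ (1 - α / 2) * |y| ^ (α / 2)) := by gcongr
      _ = _ := by rw [h2]; ring
  have e3 := abs_rpow_sub_le (a := |x + y|) (b := |x|) (m := 2 * |x|) hα1.le (abs_nonneg _) hx
    (by have := abs_add_le x y; linarith) (by linarith)
  have e4 : |(|x + y| - |x|)| ≤ |y| := by
    have := abs_abs_sub_abs_le_abs_sub (x + y) x
    rwa [add_sub_cancel_left] at this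
  have e5 : (2 * |x|) ^ (α - 1) ≤ 2 * |x| ^ (α - 1) := by
    rw [Real.mul_rpow (by norm_num) hx]
    gcongr
    calc (2 : ℝ) ^ (α - 1) ≤ 2 ^ (1 : ℝ) := Real.rpow_le_rpow_of_exponent_le (by norm_num) (by linarith)
      _ = 2 := by simp
  have e6 : |(|x + y| ^ α - |x| ^ α)| ≤ 4 * |x * y| ^ (α / 2) := by
    calc _ ≤ α * (2 * |x|) ^ (α - 1) * |(|x + y| - |x|)| := e3
      _ ≤ 2 * (2 * |x| ^ (α - 1)) * |y| := by gcongr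
      _ = 4 * (|x| ^ (α - 1) * |y|) := by ring
      _ ≤ _ := by gcongr
  calc _ ≤ |(|x + y| ^ α - |x| ^ α)| + |(|y| ^ α)| := abs_sub _ _
    _ ≤ _ := by rw [abs_of_nonneg (by positivity : 0 ≤ |y| ^ α)]; linarith

lemma abs_exp_sub_le {A B m : ℝ} (hA : m ≤ A) (hB : m ≤ B) :
    |Real.exp (-A) - Real.exp (-B)| ≤ |A - B| * Real.exp (-m) := by
  wlog h : A ≤ B generalizing A B
  · rw [abs_sub_comm, abs_sub_comm A B]
    exact this hB hA (le_of_not_ge h)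
  rw [abs_of_nonneg (sub_nonneg.2 (Real.exp_le_exp.2 (by linarith))), abs_sub_comm,
    abs_of_nonneg (sub_nonneg.2 h)]
  have h1 : Real.exp (-B) = Real.exp (-A) * Real.exp (A - B) := by
    rw [← Real.exp_add]; ring_nf
  have h2 := Real.add_one_le_exp (A - B)
  have h3 : Real.exp (-A) ≤ Real.exp (-m) := Real.exp_le_exp.2 (by linarith)
  have h4 := Real.exp_pos (-A)
  rw [h1]
  nlinarith

lemma rpow_mul_le_add {p q x y : ℝ} (hp : 0 ≤ p) (hq : 0 ≤ q) (hx : 0 ≤ x) (hy : 0 ≤ y) :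
    x ^ p * y ^ q ≤ x ^ (p + q) + y ^ (p + q) := by
  rw [Real.rpow_add_of_nonneg hx hp hq, Real.rpow_add_of_nonneg hy hp hq]
  rcases le_total x y with h | h
  · have : x ^ p * y ^ q ≤ y ^ p * y ^ q := by gcongr
    have : 0 ≤ x ^ p * x ^ q := by positivity
    linarith
  · have : x ^ p * y ^ q ≤ x ^ p * x ^ q := by gcongr
    have : 0 ≤ y ^ p * y ^ q := by positivity
    linarith

lemma abs_rpow_le_one_add {p u : ℝ} (hp : 0 ≤ p) (hp1 : p ≤ 1) : |u| ^ p ≤ 1 + |u| := by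
  calc |u| ^ p ≤ (1 + |u|) ^ p := Real.rpow_le_rpow (abs_nonneg u) (by linarith) hp
    _ ≤ (1 + |u|) ^ (1 : ℝ) :=
      Real.rpow_le_rpow_of_exponent_le (by linarith [abs_nonneg u]) hp1
    _ = _ := by simp

lemma exists_decay {α c : ℝ} (hα : 1 < α) (hc : 0 < c) :
    ∃ M > 0, ∀ u : ℝ, (1 + |u|) ^ 2 * Real.exp (-(c * |u| ^ α)) ≤ M * (1 + u ^ 2)⁻¹ := by
  refine ⟨Real.exp (2 * c) * 24 / c ^ 4, by positivity, ?_⟩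
  intro u
  have hu := abs_nonneg u
  have h1 : |u| ≤ 1 + |u| ^ α := by
    rcases le_total |u| 1 with h | h
    · have : 0 ≤ |u| ^ α := by positivity
      linarith
    · have := Real.rpow_le_rpow_of_exponent_le h hα.le
      rw [Real.rpow_one] at this
      linarith
  have h2 : Real.exp (-(c * |u| ^ α)) ≤ Real.exp (2 * c) * (Real.exp (c * (1 + |u|)))⁻¹ := by
    rw [← Real.exp_neg, ← Real.exp_add]
    apply Real.exp_le_exp.2
    nlinarith
  have h3 : (c * (1 + |u|)) ^ 4 / 24 ≤ Real.exp (c * (1 + |u|)) := by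
    have := Real.pow_div_factorial_le_exp (c * (1 + |u|)) (by positivity) 4
    simpa [Nat.factorial] using this
  have h4 : (1 + |u|) ^ 2 * (1 + u ^ 2) ≤ (1 + |u|) ^ 4 := by
    have : 1 + u ^ 2 ≤ (1 + |u|) ^ 2 := by rw [← sq_abs u]; nlinarith
    calc _ ≤ (1 + |u|) ^ 2 * (1 + |u|) ^ 2 := by gcongr
      _ = _ := by ring
  rw [← div_eq_mul_inv, le_div_iff₀ (by positivity)]
  calc (1 + |u|) ^ 2 * Real.exp (-(c * |u| ^ α)) * (1 + u ^ 2)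
      = (1 + |u|) ^ 2 * (1 + u ^ 2) * Real.exp (-(c * |u| ^ α)) := by ring
    _ ≤ (1 + |u|) ^ 4 * (Real.exp (2 * c) * ((c * (1 + |u|)) ^ 4 / 24)⁻¹) := by
      refine mul_le_mul h4 (h2.trans ?_) (Real.exp_pos _).le (by positivity)
      gcongr
    _ = _ := by field_simp

/-- the weight -/
noncomputable def Fw (β b u : ℝ) : ℝ := if |u| < 1 / b then |u| ^ (-β) else b ^ (β - 1) * |u|⁻¹

/-- truncated power -/
noncomputable def Gt (p t : ℝ) : ℝ := if |t| ≤ 1 then |t| ^ (-p) else 0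

lemma Fw_nonneg {β b : ℝ} (hb : 1 ≤ b) (u : ℝ) : 0 ≤ Fw β b u := by
  unfold Fw; split_ifs <;> positivity

lemma Gt_nonneg (p u : ℝ) : 0 ≤ Gt p u := by
  unfold Gt; split_ifs <;> positivity

lemma measurable_Fw (β b : ℝ) : Measurable (Fw β b) := by
  unfold Fw
  refine Measurable.ite (measurableSet_lt (by fun_prop) (by fun_prop)) ?_ ?_ <;> fun_prop

lemma measurable_Gt (p : ℝ) : Measurable (Gt p) := by
  unfold Gt
  refine Measurable.ite (measurableSet_le (by fun_prop) (by fun_prop)) ?_ ?_ <;> fun_prop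

lemma lint_comp_mul {a : ℝ} (ha : a ≠ 0) (h : ℝ → ℝ≥0∞) :
    ∫⁻ x, h (a * x) = ENNReal.ofReal |a⁻¹| * ∫⁻ x, h x := by
  have := (Homeomorph.mulLeft₀ a ha).measurableEmbedding.lintegral_map (μ := volume) h
  simp only [Homeomorph.coe_mulLeft₀] at this
  rw [← this, Real.map_volume_mul_left ha, lintegral_smul_measure]
  rfl

lemma lint_comp_abs (h : ℝ → ℝ≥0∞) : ∫⁻ x, h |x| = 2 * ∫⁻ x in Ioi (0:ℝ), h x := by
  have e1 : ∫⁻ x in Ioi (0:ℝ), h |x| = ∫⁻ x in Ioi (0:ℝ), h x :=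
    setLIntegral_congr_fun measurableSet_Ioi (fun x hx => by rw [abs_of_pos hx])
  have e2 : ∫⁻ x in Iic (0:ℝ), h |x| = ∫⁻ x in Ioi (0:ℝ), h x := by
    rw [← e1, setLIntegral_congr (Ioi_ae_eq_Ici (a := (0:ℝ)))]
    have m : MeasurableEmbedding fun x : ℝ => -x := (Homeomorph.neg ℝ).measurableEmbedding
    conv_lhs => rw [← Measure.map_neg_eq_self (volume : Measure ℝ)]
    rw [m.restrict_map, m.lintegral_map]
    simp
  rw [← lintegral_add_compl _ (measurableSet_Ioi (a := (0:ℝ))), compl_Ioi, e1, e2, two_mul]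

lemma lint_Gt {p : ℝ} (hp : p < 1) : ∫⁻ t, ENNReal.ofReal (Gt p t) ≠ ⊤ := by
  have : ∀ t, ENNReal.ofReal (Gt p t) =
      (fun x => (Iic (1:ℝ)).indicator (fun x => ENNReal.ofReal (x ^ (-p))) x) |t| := by
    intro t
    unfold Gt
    by_cases h : |t| ≤ 1 <;> simp [h]
  simp_rw [this]
  rw [lint_comp_abs]
  refine ENNReal.mul_ne_top (by simp) ?_
  rw [lintegral_indicator measurableSet_Iic, Measure.restrict_restrict measurableSet_Iic,
    Iic_inter_Ioi]
  have := (intervalIntegrable_iff_integrableOn_Ioc_of_le zero_le_one).1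
    (intervalIntegral.intervalIntegrable_rpow' (a := 0) (b := 1) (r := -p) (by linarith))
  exact this.lintegral_lt_top.ne

lemma lint_tail {r : ℝ} (hr : 1 < r) : ∫⁻ t : ℝ, ENNReal.ofReal ((1 + |t|) ^ (-r)) ≠ ⊤ := by
  have := integrable_one_add_norm (E := ℝ) (μ := volume) (r := r) (by simpa using hr)
  exact this.lintegral_lt_top.ne

lemma two_rpow_tail {r t : ℝ} (hr : 0 ≤ r) (ht : 1 ≤ |t|) :
    |t| ^ (-r) ≤ 2 ^ r * (1 + |t|) ^ (-r) := by
  have h0 : 0 < |t| := by linarith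
  rw [Real.rpow_neg h0.le, Real.rpow_neg (by linarith), ← div_eq_mul_inv, le_div_iff₀ (by positivity),
    inv_mul_le_iff₀ (by positivity), ← Real.mul_rpow h0.le (by norm_num)]
  exact Real.rpow_le_rpow (by linarith) (by linarith) hr

lemma lint_L4 {p : ℝ} (hp : p < 1) (hp0 : 0 ≤ p) :
    ∫⁻ t : ℝ, ENNReal.ofReal (|t| ^ (-p) * (1 + t ^ 2)⁻¹) ≠ ⊤ := by
  have h : ∀ t : ℝ, ENNReal.ofReal (|t| ^ (-p) * (1 + t ^ 2)⁻¹) ≤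
      ENNReal.ofReal (Gt p t) + ENNReal.ofReal ((1 + t ^ 2)⁻¹) := by
    intro t
    rw [← ENNReal.ofReal_add (Gt_nonneg _ _) (by positivity)]
    apply ENNReal.ofReal_le_ofReal
    have h1 : 0 < (1 + t ^ 2)⁻¹ := by positivity
    have h2 : (1 + t ^ 2)⁻¹ ≤ 1 := inv_le_one_of_one_le₀ (by nlinarith)
    have h3 : 0 ≤ |t| ^ (-p) := by positivity
    unfold Gt
    split_ifs with h
    · nlinarith
    · have : |t| ^ (-p) ≤ 1 := Real.rpow_le_one_of_one_le_of_nonpos (by linarith) (by linarith)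
      nlinarith
  refine ne_top_of_le_ne_top ?_ (lintegral_mono h)
  rw [lintegral_add_left (measurable_Gt p).ennreal_ofReal]
  exact ENNReal.add_ne_top.2 ⟨lint_Gt hp, integrable_inv_one_add_sq.lintegral_lt_top.ne⟩

lemma lint_L1 {p q : ℝ} (hp : p < 1) (hp0 : 0 ≤ p) (hq : q < 1) (hq0 : 0 ≤ q) (hpq : 1 < p + q) :
    ∫⁻ t : ℝ, ENNReal.ofReal (|t| ^ (-p) * |t + 1| ^ (-q)) ≠ ⊤ := by
  have h : ∀ t : ℝ, ENNReal.ofReal (|t| ^ (-p) * |t + 1| ^ (-q)) ≤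
      ENNReal.ofReal (2 * Gt p t) + (ENNReal.ofReal (2 * Gt q (t + 1)) +
        ENNReal.ofReal (25 * (1 + |t|) ^ (-(p + q)))) := by
    intro t
    have g1 := Gt_nonneg p t
    have g2 := Gt_nonneg q (t + 1)
    have g3 : 0 ≤ (1 + |t|) ^ (-(p + q)) := by positivity
    rw [← ENNReal.ofReal_add (by positivity) (by positivity),
      ← ENNReal.ofReal_add (by positivity) (by positivity)]
    apply ENNReal.ofReal_le_ofReal
    have hh : ∀ r : ℝ, 0 ≤ r → r < 1 → ∀ x : ℝ, 1 / 2 ≤ |x| → |x| ^ (-r) ≤ 2 := by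
      intro r hr hr1 x hx
      rw [Real.rpow_neg (abs_nonneg x), inv_le_comm₀ (by positivity) (by norm_num)]
      calc (2:ℝ)⁻¹ = (1/2) ^ (1:ℝ) := by norm_num
        _ ≤ (1/2) ^ r := Real.rpow_le_rpow_of_exponent_ge (by norm_num) (by norm_num) hr1.le
        _ ≤ _ := Real.rpow_le_rpow (by norm_num) hx hr
    have a1 : 0 ≤ |t| ^ (-p) := by positivity
    have a2 : 0 ≤ |t + 1| ^ (-q) := by positivity
    have a3 : 1 ≤ |t| + |t + 1| := by
      have := abs_sub (t + 1) t
      rw [add_sub_cancel_left, abs_one] at this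
      linarith
    by_cases c1 : |t| < 1 / 2
    · have : Gt p t = |t| ^ (-p) := by unfold Gt; rw [if_pos (by linarith)]
      have := hh q hq0 hq (t + 1) (by linarith)
      nlinarith
    by_cases c2 : |t + 1| < 1 / 2
    · have : Gt q (t + 1) = |t + 1| ^ (-q) := by unfold Gt; rw [if_pos (by linarith)]
      have := hh p hp0 hp t (by linarith)
      nlinarith
    push Not at c1 c2
    have key : ∀ r : ℝ, 0 ≤ r → r < 1 → ∀ x : ℝ, 1 + |t| ≤ 5 * x →
        0 ≤ x → x ^ (-r) ≤ 5 * (1 + |t|) ^ (-r) := by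
      intro r hr hr1 x hx hx0
      have hx0 : 0 < x := by linarith [abs_nonneg t]
      rw [Real.rpow_neg hx0.le, Real.rpow_neg (by positivity), ← div_eq_mul_inv,
        le_div_iff₀ (by positivity), inv_mul_le_iff₀ (by positivity)]
      calc (1 + |t|) ^ r ≤ (5 * x) ^ r := Real.rpow_le_rpow (by positivity) hx hr
        _ = 5 ^ r * x ^ r := by rw [Real.mul_rpow (by norm_num) hx0.le]
        _ ≤ 5 ^ (1:ℝ) * x ^ r := by
          gcongr
          norm_num
        _ = _ := by rw [Real.rpow_one]; ring
    have k1 := key p hp0 hp |t| (by linarith) (abs_nonneg _)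
    have k2 := key q hq0 hq |t + 1| (by
      have := abs_sub (t + 1) 1
      rw [add_sub_cancel_right, abs_one] at this
      linarith) (abs_nonneg _)
    have : (1 + |t|) ^ (-(p + q)) = (1 + |t|) ^ (-p) * (1 + |t|) ^ (-q) := by
      rw [← Real.rpow_add (by positivity)]; ring_nf
    rw [this]
    have := mul_le_mul k1 k2 (by positivity) (by positivity)
    linarith
  refine ne_top_of_le_ne_top ?_ (lintegral_mono h)
  have m1 := measurable_Gt p
  have m2 := measurable_Gt q
  rw [lintegral_add_left (by fun_prop), lintegral_add_left (by fun_prop)]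
  refine ENNReal.add_ne_top.2 ⟨?_, ENNReal.add_ne_top.2 ⟨?_, ?_⟩⟩
  · simp_rw [ENNReal.ofReal_mul (show (0:ℝ) ≤ 2 by norm_num)]
    rw [lintegral_const_mul _ (by fun_prop)]
    exact ENNReal.mul_ne_top (by simp) (lint_Gt hp)
  · simp_rw [ENNReal.ofReal_mul (show (0:ℝ) ≤ 2 by norm_num)]
    rw [lintegral_const_mul _ (by fun_prop),
      lintegral_add_right_eq_self (μ := volume) (fun t => ENNReal.ofReal (Gt q t)) 1]
    exact ENNReal.mul_ne_top (by simp) (lint_Gt hq)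
  · simp_rw [ENNReal.ofReal_mul (show (0:ℝ) ≤ 25 by norm_num)]
    rw [lintegral_const_mul _ (by fun_prop)]
    exact ENNReal.mul_ne_top (by simp) (lint_tail hpq)

lemma Fw_scale {β b : ℝ} (hb : 1 ≤ b) (u : ℝ) : Fw β b u = b ^ β * Fw β 1 (b * u) := by
  have hb0 : 0 < b := by linarith
  unfold Fw
  rw [abs_mul, abs_of_pos hb0]
  have : |u| < 1 / b ↔ b * |u| < 1 / 1 := by
    rw [lt_div_iff₀ hb0]; simp [mul_comm]
  simp only [this]
  split_ifs
  · rw [Real.mul_rpow hb0.le (abs_nonneg u), ← mul_assoc, ← Real.rpow_add hb0]; simp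
  · rw [Real.rpow_sub_one hb0.ne', Real.one_rpow, mul_inv]; field_simp

lemma lint_L2_one {α β : ℝ} (hα1 : 1 < α) (hα2 : α < 2) (hβ : β < α / 2) :
    ∫⁻ v, ENNReal.ofReal (Fw β 1 v * |v| ^ (α / 2 - 1)) ≠ ⊤ := by
  have h : ∀ t : ℝ, ENNReal.ofReal (Fw β 1 t * |t| ^ (α / 2 - 1)) ≤
      ENNReal.ofReal (Gt (β + 1 - α / 2) t) +
        ENNReal.ofReal (2 ^ (2 - α / 2) * (1 + |t|) ^ (-(2 - α / 2))) := by
    intro t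
    rw [← ENNReal.ofReal_add (Gt_nonneg _ _) (by positivity)]
    apply ENNReal.ofReal_le_ofReal
    unfold Fw
    rw [div_one, Real.one_rpow, one_mul]
    split_ifs with h
    · have : |t| ^ (-β) * |t| ^ (α / 2 - 1) ≤ Gt (β + 1 - α / 2) t := by
        unfold Gt
        rw [if_pos h.le]
        by_cases h0 : t = 0
        · subst h0
          rw [abs_zero, Real.zero_rpow (x := α / 2 - 1) (by linarith), mul_zero]; positivity
        · rw [← Real.rpow_add (abs_pos.2 h0)]; ring_nf; rfl
      have : 0 ≤ 2 ^ (2 - α / 2) * (1 + |t|) ^ (-(2 - α / 2)) := by positivity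
      linarith
    · push Not at h
      have h0 : 0 < |t| := by linarith
      have := two_rpow_tail (r := 2 - α / 2) (by linarith) h
      have e : |t|⁻¹ * |t| ^ (α / 2 - 1) = |t| ^ (-(2 - α / 2)) := by
        rw [← Real.rpow_neg_one, ← Real.rpow_add h0]; ring_nf
      rw [e]
      linarith [Gt_nonneg (β + 1 - α / 2) t]
  refine ne_top_of_le_ne_top ?_ (lintegral_mono h)
  have m1 := measurable_Gt (β + 1 - α / 2)
  rw [lintegral_add_left (by fun_prop)]
  refine ENNReal.add_ne_top.2 ⟨lint_Gt (by linarith), ?_⟩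
  simp_rw [ENNReal.ofReal_mul (show (0:ℝ) ≤ 2 ^ (2 - α / 2) by positivity)]
  rw [lintegral_const_mul _ (by fun_prop)]
  exact ENNReal.mul_ne_top (by simp) (lint_tail (by linarith))

lemma lint_L2 {α β b : ℝ} (hb : 1 ≤ b) :
    ∫⁻ v, ENNReal.ofReal (Fw β b v * |v| ^ (α / 2 - 1)) =
      ENNReal.ofReal (b ^ (β - α / 2)) *
        ∫⁻ v, ENNReal.ofReal (Fw β 1 v * |v| ^ (α / 2 - 1)) := by
  have hb0 : 0 < b := by linarith
  have : ∀ v, ENNReal.ofReal (Fw β b v * |v| ^ (α / 2 - 1)) =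
      ENNReal.ofReal (b ^ (β + 1 - α / 2)) *
      (fun w => ENNReal.ofReal (Fw β 1 w * |w| ^ (α / 2 - 1))) (b * v) := by
    intro v
    simp only
    rw [← ENNReal.ofReal_mul (by positivity), Fw_scale hb, abs_mul, abs_of_pos hb0,
      Real.mul_rpow hb0.le (abs_nonneg v)]
    congr 1
    have : b ^ β = b ^ (β + 1 - α / 2) * b ^ (α / 2 - 1) := by
      rw [← Real.rpow_add hb0]; ring_nf
    rw [this]; ring
  simp_rw [this]
  have m := measurable_Fw β 1
  rw [lintegral_const_mul _ (by fun_prop), lint_comp_mul hb0.ne' (fun w => ENNReal.ofReal (Fw β 1 w * |w| ^ (α / 2 - 1))), ← mul_assoc,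
    ← ENNReal.ofReal_mul (by positivity)]
  congr 2
  rw [abs_of_pos (by positivity), ← Real.rpow_neg_one, ← Real.rpow_add hb0]
  ring_nf

lemma lint_L3 {β : ℝ} (hβ : β < 1) : ∃ C > 0, ∀ b : ℝ, 1 ≤ b →
    ∫⁻ v, ENNReal.ofReal (Fw β b v * (1 + v ^ 2)⁻¹) ≤
      ENNReal.ofReal (C * b ^ (β - 1) * Real.log (b + 1)) := by
  set G := (∫⁻ t, ENNReal.ofReal (Gt β t)).toReal with hG
  have hG0 : 0 ≤ G := ENNReal.toReal_nonneg
  set P := (∫⁻ t : ℝ, ENNReal.ofReal ((1 + t ^ 2)⁻¹)).toReal with hP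
  have hP0 : 0 ≤ P := ENNReal.toReal_nonneg
  have hl2 : 0 < Real.log 2 := Real.log_pos (by norm_num)
  refine ⟨G / Real.log 2 + P / Real.log 2 + 2, by positivity, ?_⟩
  intro b hb
  have hb0 : 0 < b := by linarith
  set ind : ℝ → ℝ≥0∞ := fun x => (Icc (1 / b) 1).indicator (fun x => ENNReal.ofReal (x⁻¹)) x with hind
  have h : ∀ t : ℝ, ENNReal.ofReal (Fw β b t * (1 + t ^ 2)⁻¹) ≤
      ENNReal.ofReal (b ^ β) * ENNReal.ofReal (Gt β (b * t)) +
      (ENNReal.ofReal (b ^ (β - 1)) * ENNReal.ofReal ((1 + t ^ 2)⁻¹) +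
        ENNReal.ofReal (b ^ (β - 1)) * ind |t|) := by
    intro t
    have h1 : 0 < (1 + t ^ 2)⁻¹ := by positivity
    have h2 : (1 + t ^ 2)⁻¹ ≤ 1 := inv_le_one_of_one_le₀ (by nlinarith)
    by_cases c1 : |t| < 1 / b
    · refine le_trans ?_ le_self_add
      rw [← ENNReal.ofReal_mul (by positivity)]
      apply ENNReal.ofReal_le_ofReal
      have : Fw β b t = b ^ β * Gt β (b * t) := by
        unfold Fw Gt
        rw [if_pos c1, abs_mul, abs_of_pos hb0, if_pos (by
          rw [lt_div_iff₀ hb0] at c1; linarith), Real.mul_rpow hb0.le (abs_nonneg t), ← mul_assoc,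
          ← Real.rpow_add hb0]
        simp
      rw [← this]
      have := Fw_nonneg (β := β) hb t
      nlinarith
    · have e : Fw β b t = b ^ (β - 1) * |t|⁻¹ := by unfold Fw; rw [if_neg c1]
      refine le_trans ?_ le_add_self
      rw [e]
      have hbb : 0 < b ^ (β - 1) := by positivity
      push Not at c1
      have ht : 0 < |t| := lt_of_lt_of_le (by positivity) c1
      by_cases c2 : |t| ≤ 1
      · refine le_trans ?_ le_add_self
        have : ind |t| = ENNReal.ofReal (|t|⁻¹) := by
          simp only [hind]
          rw [indicator_of_mem (mem_Icc.2 ⟨c1, c2⟩)]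
        rw [this, ← ENNReal.ofReal_mul hbb.le]
        apply ENNReal.ofReal_le_ofReal
        have : 0 < b ^ (β - 1) * |t|⁻¹ := by positivity
        nlinarith
      · refine le_trans ?_ le_self_add
        rw [← ENNReal.ofReal_mul hbb.le]
        apply ENNReal.ofReal_le_ofReal
        have : |t|⁻¹ ≤ 1 := inv_le_one_of_one_le₀ (by linarith)
        have : b ^ (β - 1) * |t|⁻¹ ≤ b ^ (β - 1) := by nlinarith
        gcongr
  refine (lintegral_mono h).trans ?_
  have m1 := measurable_Gt β
  have hindm : Measurable ind := Measurable.indicator (by fun_prop) measurableSet_Icc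
  rw [lintegral_add_left (by fun_prop), lintegral_add_left (by fun_prop),
    lintegral_const_mul _ (by fun_prop), lintegral_const_mul _ (by fun_prop),
    lintegral_const_mul _ (by fun_prop), lint_comp_abs,
    lint_comp_mul hb0.ne' (fun t => ENNReal.ofReal (Gt β t))]
  have i1 : ∫⁻ t, ENNReal.ofReal (Gt β t) = ENNReal.ofReal G :=
    (ENNReal.ofReal_toReal (lint_Gt hβ)).symm
  have i2 : ∫⁻ t : ℝ, ENNReal.ofReal ((1 + t ^ 2)⁻¹) = ENNReal.ofReal P :=
    (ENNReal.ofReal_toReal integrable_inv_one_add_sq.lintegral_lt_top.ne).symm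
  have hb1 : 1 / b ≤ 1 := by rw [div_le_one hb0]; exact hb
  have i3 : ∫⁻ x in Ioi (0:ℝ), ind x = ENNReal.ofReal (Real.log b) := by
    simp only [hind]
    rw [lintegral_indicator measurableSet_Icc, Measure.restrict_restrict measurableSet_Icc]
    have : Icc (1 / b) 1 ∩ Ioi 0 = Icc (1 / b) 1 := by
      apply inter_eq_left.2
      intro x hx
      exact lt_of_lt_of_le (by positivity : 0 < 1 / b) hx.1
    rw [this, ← setLIntegral_congr (Ioc_ae_eq_Icc (a := 1 / b) (b := (1:ℝ))),
      ← ofReal_integral_eq_lintegral_ofReal, ← intervalIntegral.integral_of_le hb1,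
      integral_inv_of_pos (by positivity) one_pos]
    · simp
    · have := intervalIntegral.intervalIntegrable_inv (μ := volume) (a := 1 / b) (b := 1) (f := fun x => x)
        (fun x hx => by
          rw [uIcc_of_le hb1] at hx
          have : 0 < x := lt_of_lt_of_le (by positivity) hx.1
          exact this.ne') continuousOn_id
      exact (intervalIntegrable_iff_integrableOn_Ioc_of_le hb1).1 this
    · filter_upwards [ae_restrict_mem measurableSet_Ioc] with x hx
      have : 0 < x := lt_trans (by positivity) hx.1
      simp only [Pi.zero_apply]
      positivity
  have hlb : 0 ≤ Real.log b := Real.log_nonneg hb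
  have two : (2 : ℝ≥0∞) = ENNReal.ofReal 2 := by simp
  rw [i1, i2, i3, two, abs_of_pos (by positivity)]
  simp only [← ENNReal.ofReal_mul (show (0:ℝ) ≤ b ^ β by positivity),
    ← ENNReal.ofReal_mul (show (0:ℝ) ≤ b ^ (β - 1) by positivity),
    ← ENNReal.ofReal_mul (show (0:ℝ) ≤ 2 by positivity),
    ← ENNReal.ofReal_mul (show (0:ℝ) ≤ b⁻¹ by positivity)]
  rw [← ENNReal.ofReal_add (by positivity) (by positivity),
    ← ENNReal.ofReal_add (by positivity) (by positivity)]
  apply ENNReal.ofReal_le_ofReal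
  have e : b ^ β * (b⁻¹ * G) = b ^ (β - 1) * G := by
    rw [Real.rpow_sub_one hb0.ne']; field_simp
  rw [e]
  have l1 : Real.log b ≤ Real.log (b + 1) := Real.log_le_log hb0 (by linarith)
  have l2 : Real.log 2 ≤ Real.log (b + 1) := Real.log_le_log (by norm_num) (by linarith)
  have l3 : G ≤ G / Real.log 2 * Real.log (b + 1) := by
    rw [div_mul_eq_mul_div, le_div_iff₀ hl2]; gcongr
  have l4 : P ≤ P / Real.log 2 * Real.log (b + 1) := by
    rw [div_mul_eq_mul_div, le_div_iff₀ hl2]; gcongr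
  calc _ = b ^ (β - 1) * (G + P + 2 * Real.log b) := by ring
    _ ≤ b ^ (β - 1) * (G / Real.log 2 * Real.log (b + 1) + P / Real.log 2 * Real.log (b + 1)
        + 2 * Real.log (b + 1)) := by gcongr
    _ = _ := by ring

lemma Fw_le {α β b : ℝ} (hα2 : α < 2) (hβ : β < α / 2) (hb : 1 ≤ b) {u : ℝ} (hu : u ≠ 0) :
    Fw β b u ≤ b ^ (β - α / 2) * |u| ^ (-(α / 2)) := by
  have hb0 : 0 < b := by linarith
  have hu : 0 < |u| := abs_pos.2 hu
  rw [Fw_scale hb]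
  have key : Fw β 1 (b * u) ≤ |b * u| ^ (-(α / 2)) := by
    have h0 : 0 < |b * u| := by rw [abs_mul, abs_of_pos hb0]; positivity
    unfold Fw
    rw [div_one, Real.one_rpow, one_mul]
    split_ifs with h
    · exact Real.rpow_le_rpow_of_exponent_ge h0 h.le (by linarith)
    · rw [← Real.rpow_neg_one]
      exact Real.rpow_le_rpow_of_exponent_le (by linarith) (by linarith)
  calc _ ≤ b ^ β * |b * u| ^ (-(α / 2)) := by gcongr
    _ = _ := by
      rw [abs_mul, abs_of_pos hb0, Real.mul_rpow hb0.le hu.le, ← mul_assoc, ← Real.rpow_add hb0]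
      rfl

lemma lint_L5 {α β b : ℝ} (hα2 : α < 2) (hβ : β < α / 2) (hb : 1 ≤ b) :
    ∫⁻ v, ENNReal.ofReal (Fw β b v * (1 + v ^ 2)⁻¹) ≤
      ENNReal.ofReal (b ^ (β - α / 2)) *
        ∫⁻ v, ENNReal.ofReal (|v| ^ (-(α / 2)) * (1 + v ^ 2)⁻¹) := by
  rw [← lintegral_const_mul _ (by fun_prop)]
  apply lintegral_mono_ae
  filter_upwards [Measure.ae_ne volume (0:ℝ)] with v hv
  rw [← ENNReal.ofReal_mul (by positivity), ← mul_assoc]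
  apply ENNReal.ofReal_le_ofReal
  have := Fw_le hα2 hβ hb hv
  gcongr

/-- the key one dimensional estimate -/
lemma lint_inner {α β b x y v : ℝ} (hα1 : 1 < α) (hα2 : α < 2) (hβ : β < α / 2) (hb : 1 ≤ b)
    (hx : x ≠ 0) (hy : y ≠ 0) (hv : v ≠ 0) :
    ∫⁻ u, ENNReal.ofReal (|u * x + v * y| ^ (α - 2) * |x * y|) * ENNReal.ofReal (Fw β b u) ≤
      ENNReal.ofReal (b ^ (β - α / 2)) * (ENNReal.ofReal (|x * y| ^ (α / 2)) *
        (ENNReal.ofReal (|v| ^ (α / 2 - 1)) *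
        ∫⁻ t : ℝ, ENNReal.ofReal (|t| ^ (-(α / 2)) * |t + 1| ^ (-(2 - α))))) := by
  have hb0 : 0 < b := by linarith
  have ha : v * y / x ≠ 0 := by positivity
  have hxp := abs_pos.2 hx
  have hyp := abs_pos.2 hy
  have hvp := abs_pos.2 hv
  have step : ∫⁻ u, ENNReal.ofReal (|u * x + v * y| ^ (α - 2) * |x * y|) * ENNReal.ofReal (Fw β b u)
      = ENNReal.ofReal |v * y / x| * ∫⁻ t, ENNReal.ofReal (|(v * y / x * t) * x + v * y| ^ (α - 2) * |x * y|) *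
        ENNReal.ofReal (Fw β b (v * y / x * t)) := by
    rw [lint_comp_mul ha (fun u => ENNReal.ofReal (|u * x + v * y| ^ (α - 2) * |x * y|) *
        ENNReal.ofReal (Fw β b u)), ← mul_assoc, ← ENNReal.ofReal_mul (abs_nonneg _), ← abs_mul,
        mul_inv_cancel₀ ha]
    simp
  rw [step, ← lintegral_const_mul' _ _ (by simp), ← lintegral_const_mul' _ _ (by simp),
    ← lintegral_const_mul' _ _ (by simp), ← lintegral_const_mul' _ _ (by simp)]
  apply lintegral_mono_ae
  filter_upwards [Measure.ae_ne volume (0:ℝ)] with t ht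
  have htp := abs_pos.2 ht
  rw [← ENNReal.ofReal_mul (by positivity), ← ENNReal.ofReal_mul (by positivity),
   ← ENNReal.ofReal_mul (by positivity), ← ENNReal.ofReal_mul (by positivity),
   ← ENNReal.ofReal_mul (by positivity)]
  apply ENNReal.ofReal_le_ofReal
  have hF := Fw_le hα2 hβ hb (mul_ne_zero ha ht)
  calc _ ≤ |v * y / x| * (|v * y / x * t * x + v * y| ^ (α - 2) * |x * y| *
        (b ^ (β - α / 2) * |v * y / x * t| ^ (-(α / 2)))) := by gcongr
    _ = _ := by
      have e1 : v * y / x * t * x + v * y = v * y * (t + 1) := by field_simp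
      have e2 : |v| ^ (α / 2 - 1) = |v| * |v| ^ (α - 2) * |v| ^ (-(α / 2)) := by
        rw [← Real.rpow_one_add' hvp.le (by linarith), ← Real.rpow_add hvp]; ring_nf
      have e3 : |y| ^ (α / 2) = |y| * |y| ^ (α - 2) * |y| ^ (-(α / 2)) * |y| := by
        rw [← Real.rpow_one_add' hyp.le (by linarith), ← Real.rpow_add hyp, ← Real.rpow_add_one hyp.ne']; ring_nf
      rw [e1]
      simp only [abs_mul, abs_div]
      rw [Real.mul_rpow (by positivity) (by positivity), Real.mul_rpow (by positivity) (by positivity),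
        Real.mul_rpow (by positivity) (by positivity), Real.div_rpow (by positivity) (by positivity),
        Real.mul_rpow (by positivity) (by positivity), Real.mul_rpow (by positivity) (by positivity),
        e2, e3, Real.rpow_neg hxp.le, neg_sub]
      field_simp

section mu

variable {S : Type} [MeasurableSpace S] {μ : Measure S} {f g : S → ℝ} {α : ℝ}

lemma nrm_rpow (hα1 : 1 < α) (f : S → ℝ) : nrm α μ f ^ α = ∫ s, |f s| ^ α ∂μ := by
  unfold nrm
  rw [← Real.rpow_mul (integral_nonneg fun s => by positivity), one_div,
    inv_mul_cancel₀ (by linarith), Real.rpow_one]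

lemma nrm_const_rpow (hα1 : 1 < α) (f : S → ℝ) (u : ℝ) :
    nrm α μ (fun s => u * f s) ^ α = |u| ^ α * nrm α μ f ^ α := by
  rw [nrm_rpow hα1, nrm_rpow hα1, ← integral_const_mul]
  congr 1; ext s
  rw [abs_mul, Real.mul_rpow (abs_nonneg _) (abs_nonneg _)]

lemma measurable_spow (p : ℝ) : Measurable (fun a => spow a p) := by
  unfold spow
  have : Measurable Real.sign := by
    unfold Real.sign
    refine Measurable.ite measurableSet_Iio (by fun_prop) ?_
    exact Measurable.ite measurableSet_Ioi (by fun_prop) (by fun_prop)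
  fun_prop

lemma MemLalpha.const_mul (hf : MemLalpha α μ f) (u : ℝ) : MemLalpha α μ (fun s => u * f s) := by
  refine ⟨hf.1.const_mul u, ?_⟩
  have : (fun s => |u * f s| ^ α) = fun s => |u| ^ α * |f s| ^ α := by
    ext s
    rw [abs_mul, Real.mul_rpow (abs_nonneg _) (abs_nonneg _)]
  rw [this]
  exact hf.2.const_mul _

lemma aesm_rpow (hf : AEStronglyMeasurable f μ) (p : ℝ) :
    AEStronglyMeasurable (fun s => |f s| ^ p) μ := by
  have := hf.aemeasurable
  exact AEMeasurable.aestronglyMeasurable (by fun_prop)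

lemma MemLalpha.add (hα1 : 1 < α) (hα2 : α < 2) (hf : MemLalpha α μ f) (hg : MemLalpha α μ g) :
    MemLalpha α μ (fun s => f s + g s) := by
  refine ⟨hf.1.add hg.1, ?_⟩
  refine Integrable.mono' ((hf.2.add hg.2).const_mul 4) (aesm_rpow (hf.1.add hg.1) α) ?_
  refine ae_of_all _ fun s => ?_
  simp only [Pi.add_apply]
  rw [Real.norm_of_nonneg (by positivity)]
  calc |f s + g s| ^ α ≤ (2 * max |f s| |g s|) ^ α := by
        refine Real.rpow_le_rpow (abs_nonneg _) ?_ (by linarith)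
        have := abs_add_le (f s) (g s)
        have := le_max_left |f s| |g s|
        have := le_max_right |f s| |g s|
        linarith
    _ = 2 ^ α * (max |f s| |g s|) ^ α := by
        rw [Real.mul_rpow (by norm_num) (by positivity)]
    _ ≤ 4 * (|f s| ^ α + |g s| ^ α) := by
        have h1 : (2:ℝ) ^ α ≤ 4 := by
          calc (2:ℝ) ^ α ≤ 2 ^ (2:ℝ) :=
                Real.rpow_le_rpow_of_exponent_le (by norm_num) hα2.le
            _ = 4 := by norm_num
        have h2 : (max |f s| |g s|) ^ α ≤ |f s| ^ α + |g s| ^ α := by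
          have : 0 ≤ |f s| ^ α := by positivity
          have : 0 ≤ |g s| ^ α := by positivity
          rcases max_choice |f s| |g s| with h | h <;> rw [h] <;> linarith
        gcongr

lemma integrable_dep1s (hα1 : 1 < α) (hf : MemLalpha α μ f) (hg : MemLalpha α μ g) :
    Integrable (fun s => |f s| ^ (α - 1) * |g s|) μ := by
  refine Integrable.mono' (hf.2.add hg.2) ((aesm_rpow hf.1 _).mul hg.1.norm) ?_
  refine ae_of_all _ fun s => ?_
  rw [Real.norm_of_nonneg (by positivity)]
  have := rpow_mul_le_add (p := α - 1) (q := 1) (by linarith) (by norm_num) (abs_nonneg (f s))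
    (abs_nonneg (g s))
  simpa using this

lemma dep1s_le (hα1 : 1 < α) (hf : MemLalpha α μ f) (hg : MemLalpha α μ g) :
    dep1s α μ f g ≤ nrm α μ f ^ α + nrm α μ g ^ α := by
  rw [nrm_rpow hα1, nrm_rpow hα1, ← integral_add hf.2 hg.2]
  refine integral_mono (integrable_dep1s hα1 hf hg) (hf.2.add hg.2) fun s => ?_
  have := rpow_mul_le_add (p := α - 1) (q := 1) (by linarith) (by norm_num) (abs_nonneg (f s))
    (abs_nonneg (g s))
  simpa using this

lemma dep1s_nonneg (f g : S → ℝ) : 0 ≤ dep1s α μ f g :=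
  integral_nonneg fun s => by positivity

lemma dep2_nonneg (f g : S → ℝ) : 0 ≤ dep2 α μ f g :=
  integral_nonneg fun s => by positivity

lemma integrable_dep2 (hα1 : 1 < α) (hf : MemLalpha α μ f) (hg : MemLalpha α μ g) :
    Integrable (fun s => |f s * g s| ^ (α / 2)) μ := by
  refine Integrable.mono' (hf.2.add hg.2) (aesm_rpow (hf.1.mul hg.1) _) ?_
  refine ae_of_all _ fun s => ?_
  rw [Real.norm_of_nonneg (by positivity)]
  have := rpow_mul_le_add (p := α / 2) (q := α / 2) (by linarith) (by linarith) (abs_nonneg (f s))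
    (abs_nonneg (g s))
  rw [abs_mul, Real.mul_rpow (abs_nonneg _) (abs_nonneg _)]
  simpa using this

lemma integrable_spow (hα1 : 1 < α) (hf : MemLalpha α μ f) (hg : MemLalpha α μ g) :
    Integrable (fun s => spow (f s) (α - 1) * g s) μ := by
  refine Integrable.mono' (integrable_dep1s hα1 hf hg) ?_ ?_
  · have h1 := hf.1.aemeasurable
    exact ((measurable_spow (α - 1)).comp_aemeasurable h1).aestronglyMeasurable.mul hg.1
  · refine ae_of_all _ fun s => ?_
    rw [Real.norm_eq_abs, abs_mul]
    have := abs_spow_le (f s) (α - 1)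
    gcongr

lemma I_diff (hα1 : 1 < α) (hα2 : α < 2) (hf : MemLalpha α μ f) (hg : MemLalpha α μ g) (u v : ℝ) :
    |(∫ s, spow (u * f s + v * g s) (α - 1) * f s ∂μ) - ∫ s, spow (u * f s) (α - 1) * f s ∂μ| ≤
      2 * |v| ^ (α - 1) * dep1s α μ g f := by
  rw [← integral_sub (integrable_spow hα1 ((hf.const_mul u).add hα1 hα2 (hg.const_mul v)) hf)
    (integrable_spow hα1 (hf.const_mul u) hf)]
  unfold dep1s
  rw [← integral_const_mul, ← Real.norm_eq_abs]
  refine norm_integral_le_of_norm_le ((integrable_dep1s hα1 hg hf).const_mul _) ?_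
  refine ae_of_all _ fun s => ?_
  rw [← sub_mul, Real.norm_eq_abs, abs_mul]
  have := spow_sub_le (p := α - 1) (by linarith) (by linarith) (u * f s) (v * g s)
  rw [abs_mul v, Real.mul_rpow (abs_nonneg _) (abs_nonneg _)] at this
  calc _ ≤ 2 * (|v| ^ (α - 1) * |g s| ^ (α - 1)) * |f s| := by gcongr
    _ = _ := by ring

lemma I_self (hα1 : 1 < α) (hf : MemLalpha α μ f) (u : ℝ) :
    |∫ s, spow (u * f s) (α - 1) * f s ∂μ| ≤ |u| ^ (α - 1) * nrm α μ f ^ α := by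
  rw [nrm_rpow hα1, ← integral_const_mul, ← Real.norm_eq_abs]
  refine norm_integral_le_of_norm_le (hf.2.const_mul _) ?_
  refine ae_of_all _ fun s => ?_
  rw [Real.norm_eq_abs, abs_mul]
  have := abs_spow_le (u * f s) (α - 1)
  rw [abs_mul u, Real.mul_rpow (abs_nonneg _) (abs_nonneg _)] at this
  have e : |f s| ^ α = |f s| ^ (α - 1) * |f s| := by
    rw [← Real.rpow_add_one' (abs_nonneg _) (by linarith)]; ring_nf
  rw [e, ← mul_assoc]
  gcongr

lemma N_diff (hα1 : 1 < α) (hα2 : α < 2) (hf : MemLalpha α μ f) (hg : MemLalpha α μ g) (u v : ℝ) :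
    |nrm α μ (fun s => u * f s + v * g s) ^ α - (nrm α μ (fun s => u * f s) ^ α
      + nrm α μ (fun s => v * g s) ^ α)| ≤ 5 * (|u| ^ (α / 2) * |v| ^ (α / 2)) * dep2 α μ f g := by
  have hu := hf.const_mul u
  have hv := hg.const_mul v
  have hI : Integrable (fun s => |u * f s + v * g s| ^ α - |u * f s| ^ α) μ :=
    (hu.add hα1 hα2 hv).2.sub hu.2
  rw [nrm_rpow hα1, nrm_rpow hα1, nrm_rpow hα1, ← sub_sub,
    ← integral_sub (hu.add hα1 hα2 hv).2 hu.2, ← integral_sub hI hv.2]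
  unfold dep2
  rw [← integral_const_mul, ← Real.norm_eq_abs]
  refine norm_integral_le_of_norm_le ((integrable_dep2 hα1 hf hg).const_mul _) ?_
  refine ae_of_all _ fun s => ?_
  rw [Real.norm_eq_abs]
  refine (abs_add_rpow_le hα1 hα2 (u * f s) (v * g s)).trans (le_of_eq ?_)
  have : u * f s * (v * g s) = u * v * (f s * g s) := by ring
  rw [this, abs_mul (u * v), abs_mul u v, Real.mul_rpow (by positivity) (by positivity),
    Real.mul_rpow (by positivity) (by positivity)]
  ring

lemma T1_meas [SigmaFinite μ] {β b : ℝ} (hα1 : 1 < α) (hα2 : α < 2) (hβ : β < α / 2) (hb : 1 ≤ b)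
    (hf : Measurable f) (hg : Measurable g) :
    ∫⁻ u, ∫⁻ v, (∫⁻ s, ENNReal.ofReal (|u * f s + v * g s| ^ (α - 2) * |f s * g s|) ∂μ) *
        (ENNReal.ofReal (Fw β b u) * ENNReal.ofReal (Fw β b v)) ≤
      ENNReal.ofReal (b ^ (β - α / 2)) * (ENNReal.ofReal (b ^ (β - α / 2)) *
        (∫⁻ v, ENNReal.ofReal (Fw β 1 v * |v| ^ (α / 2 - 1))) *
        (∫⁻ t : ℝ, ENNReal.ofReal (|t| ^ (-(α / 2)) * |t + 1| ^ (-(2 - α)))) *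
        ∫⁻ s, ENNReal.ofReal (|f s * g s| ^ (α / 2)) ∂μ) := by
  have mF := measurable_Fw β b
  set K := ∫⁻ t : ℝ, ENNReal.ofReal (|t| ^ (-(α / 2)) * |t + 1| ^ (-(2 - α)))
  set D := ∫⁻ s, ENNReal.ofReal (|f s * g s| ^ (α / 2)) ∂μ
  have mA : Measurable (fun p : ℝ × ℝ =>
      ∫⁻ s, ENNReal.ofReal (|p.1 * f s + p.2 * g s| ^ (α - 2) * |f s * g s|) ∂μ) := by
    refine Measurable.lintegral_prod_right'
      (f := fun q : (ℝ × ℝ) × S =>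
        ENNReal.ofReal (|q.1.1 * f q.2 + q.1.2 * g q.2| ^ (α - 2) * |f q.2 * g q.2|)) ?_
    fun_prop
  rw [lintegral_lintegral_swap]
  swap
  · apply Measurable.aemeasurable
    unfold Function.uncurry
    exact mA.mul (by fun_prop)
  rw [← lint_L2 hb, mul_assoc, ← lintegral_mul_const _ (by fun_prop),
    ← lintegral_const_mul _ (by fun_prop)]
  apply lintegral_mono_ae
  filter_upwards [Measure.ae_ne volume (0:ℝ)] with v hv
  have mAv : Measurable (fun u : ℝ =>
      ∫⁻ s, ENNReal.ofReal (|u * f s + v * g s| ^ (α - 2) * |f s * g s|) ∂μ) :=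
    mA.comp (f := fun u : ℝ => (u, v)) (by fun_prop)
  calc _ = (∫⁻ u, ∫⁻ s, ENNReal.ofReal (|u * f s + v * g s| ^ (α - 2) * |f s * g s|) *
        ENNReal.ofReal (Fw β b u) ∂μ) * ENNReal.ofReal (Fw β b v) := by
        rw [← lintegral_mul_const' _ _ (by simp)]
        apply lintegral_congr
        intro u
        rw [lintegral_mul_const' _ _ (by simp), mul_assoc]
    _ = (∫⁻ s, ∫⁻ u, ENNReal.ofReal (|u * f s + v * g s| ^ (α - 2) * |f s * g s|) *
        ENNReal.ofReal (Fw β b u) ∂volume ∂μ) * ENNReal.ofReal (Fw β b v) := by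
        rw [lintegral_lintegral_swap]
        apply Measurable.aemeasurable
        unfold Function.uncurry
        fun_prop
    _ ≤ (∫⁻ s, ENNReal.ofReal (b ^ (β - α / 2)) * (ENNReal.ofReal (|f s * g s| ^ (α / 2)) *
        (ENNReal.ofReal (|v| ^ (α / 2 - 1)) * K)) ∂μ) * ENNReal.ofReal (Fw β b v) := by
        gcongr with s
        by_cases h : f s = 0 ∨ g s = 0
        · have : f s * g s = 0 := by rcases h with h | h <;> simp [h]
          simp [this]
        · push Not at h
          exact lint_inner hα1 hα2 hβ hb h.1 h.2 hv
    _ = _ := by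
        rw [lintegral_const_mul _ (by fun_prop), lintegral_mul_const _ (by fun_prop),
          ENNReal.ofReal_mul (Fw_nonneg hb v)]
        ring

lemma T1_le [SigmaFinite μ] {β b : ℝ} (hα1 : 1 < α) (hα2 : α < 2) (hβ : β < α / 2) (hb : 1 ≤ b)
    (hf : MemLalpha α μ f) (hg : MemLalpha α μ g) :
    ∫⁻ u, ∫⁻ v, ENNReal.ofReal |∫ s, (if f s = 0 ∨ g s = 0 then (0:ℝ) else
        |u * f s + v * g s| ^ (α - 2) * (f s * g s)) ∂μ| *
        (ENNReal.ofReal (Fw β b u) * ENNReal.ofReal (Fw β b v)) ≤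
      ENNReal.ofReal (b ^ (β - α / 2)) * (ENNReal.ofReal (b ^ (β - α / 2)) *
        (∫⁻ v, ENNReal.ofReal (Fw β 1 v * |v| ^ (α / 2 - 1))) *
        (∫⁻ t : ℝ, ENNReal.ofReal (|t| ^ (-(α / 2)) * |t + 1| ^ (-(2 - α)))) *
        ENNReal.ofReal (dep2 α μ f g)) := by
  have hf' := hf.1.aemeasurable
  have hg' := hg.1.aemeasurable
  have e1 := hf'.ae_eq_mk
  have e2 := hg'.ae_eq_mk
  have hD : ENNReal.ofReal (dep2 α μ f g) =
      ∫⁻ s, ENNReal.ofReal (|hf'.mk f s * hg'.mk g s| ^ (α / 2)) ∂μ := by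
    unfold dep2
    rw [ofReal_integral_eq_lintegral_ofReal (integrable_dep2 hα1 hf hg)
      (ae_of_all _ fun s => by positivity)]
    apply lintegral_congr_ae
    filter_upwards [e1, e2] with s h1 h2
    rw [h1, h2]
  rw [hD]
  refine le_trans ?_ (T1_meas hα1 hα2 hβ hb hf'.measurable_mk hg'.measurable_mk)
  gcongr with u v
  rw [← Real.enorm_eq_ofReal_abs]
  refine (enorm_integral_le_lintegral_enorm _).trans ?_
  apply lintegral_mono_ae
  filter_upwards [e1, e2] with s h1 h2
  rw [← h1, ← h2, Real.enorm_eq_ofReal_abs]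
  apply ENNReal.ofReal_le_ofReal
  split_ifs
  · simp; positivity
  · rw [abs_mul, abs_of_nonneg (by positivity : 0 ≤ |u * f s + v * g s| ^ (α - 2))]

end mu

lemma alg_D1 {α I I0 e1 e0 X Y a d P W : ℝ} (hα : 1 < α) (hX : 1 ≤ X) (hY : 1 ≤ Y)
    (ha : 0 ≤ a) (hd : 0 ≤ d) (hP : 0 ≤ P) (hW : 0 ≤ W)
    (h1 : |I - I0| ≤ 2 * Y * a) (h2 : |I0| ≤ X * P) (h3 : |e1| ≤ W)
    (h4 : |e1 - e0| ≤ 5 * (X * Y) * d * W) :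
    |(-α) * I * e1 + α * I0 * e0| ≤ α * (2 + 5 * P) * (a + d) * (X ^ 2 * Y ^ 2 * W) := by
  have e : (-α) * I * e1 + α * I0 * e0 = -(α * ((I - I0) * e1 + I0 * (e1 - e0))) := by ring
  rw [e, abs_neg, abs_mul, abs_of_pos (by linarith)]
  have s1 : |(I - I0) * e1 + I0 * (e1 - e0)| ≤ 2 * Y * a * W + X * P * (5 * (X * Y) * d * W) := by
    refine (abs_add_le _ _).trans ?_
    rw [abs_mul, abs_mul]
    gcongr
  have z1 : Y ≤ X ^ 2 * Y ^ 2 := by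
    have : 1 ≤ X ^ 2 := one_le_pow₀ hX
    nlinarith
  have z2 : X ^ 2 * Y ≤ X ^ 2 * Y ^ 2 := by gcongr; nlinarith
  calc _ ≤ α * (2 * Y * a * W + X * P * (5 * (X * Y) * d * W)) := by gcongr
    _ = α * (2 * a * W * Y + 5 * P * d * W * (X ^ 2 * Y)) := by ring
    _ ≤ α * (2 * a * W * (X ^ 2 * Y ^ 2) + 5 * P * d * W * (X ^ 2 * Y ^ 2)) := by gcongr
    _ ≤ α * (2 * a * W * (X ^ 2 * Y ^ 2) + 5 * P * d * W * (X ^ 2 * Y ^ 2)) +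
        α * (2 * d * W * (X ^ 2 * Y ^ 2) + 5 * P * a * W * (X ^ 2 * Y ^ 2)) :=
        le_add_of_nonneg_right (by positivity)
    _ = _ := by ring

lemma alg_D2 {α I I0 J J0 e1 e0 X Y a a' d P Q W : ℝ} (hX : 1 ≤ X) (hY : 1 ≤ Y)
    (ha : 0 ≤ a) (ha' : 0 ≤ a') (hd : 0 ≤ d) (hP : 0 ≤ P) (hQ : 0 ≤ Q) (hW : 0 ≤ W)
    (haPQ : a' ≤ P + Q)
    (h1 : |I - I0| ≤ 2 * Y * a) (h2 : |I0| ≤ X * P)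
    (h1' : |J - J0| ≤ 2 * X * a') (h2' : |J0| ≤ Y * Q) (h3 : |e1| ≤ W)
    (h4 : |e1 - e0| ≤ 5 * (X * Y) * d * W) :
    |α ^ 2 * I * J * e1 - α ^ 2 * I0 * J0 * e0| ≤
      α ^ 2 * (4 * P + 6 * Q + 2 * P + 5 * (P * Q)) * (a' + a + d) * (X ^ 2 * Y ^ 2 * W) := by
  have e : α ^ 2 * I * J * e1 - α ^ 2 * I0 * J0 * e0 =
      α ^ 2 * ((I - I0) * J * e1 + I0 * (J - J0) * e1 + I0 * J0 * (e1 - e0)) := by ring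
  rw [e, abs_mul, abs_of_nonneg (by positivity : 0 ≤ α ^ 2)]
  have hJ : |J| ≤ X * Y * (2 * P + 3 * Q) := by
    have : |J| ≤ |J - J0| + |J0| := by
      have := abs_add_le (J - J0) J0
      rwa [sub_add_cancel] at this
    calc |J| ≤ 2 * X * a' + Y * Q := by linarith
      _ ≤ 2 * X * (P + Q) + Y * Q := by gcongr
      _ ≤ 2 * (X * Y) * (P + Q) + (X * Y) * Q := by
        gcongr <;> nlinarith
      _ = _ := by ring
  have s1 : |(I - I0) * J * e1 + I0 * (J - J0) * e1 + I0 * J0 * (e1 - e0)| ≤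
      2 * Y * a * (X * Y * (2 * P + 3 * Q)) * W + X * P * (2 * X * a') * W
        + X * P * (Y * Q) * (5 * (X * Y) * d * W) := by
    refine (abs_add_le _ _).trans ?_
    refine add_le_add ((abs_add_le _ _).trans ?_) ?_
    · simp only [abs_mul]
      gcongr
    · simp only [abs_mul]
      gcongr
  have z1 : X * Y ^ 2 ≤ X ^ 2 * Y ^ 2 := by gcongr; nlinarith
  have z2 : X ^ 2 ≤ X ^ 2 * Y ^ 2 := le_mul_of_one_le_right (by positivity) (one_le_pow₀ hY)
  set Z := X ^ 2 * Y ^ 2 with hZ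
  have hZ0 : 0 ≤ Z := by positivity
  have s2 : 2 * Y * a * (X * Y * (2 * P + 3 * Q)) * W + X * P * (2 * X * a') * W
        + X * P * (Y * Q) * (5 * (X * Y) * d * W) ≤
      (4 * P + 6 * Q + 2 * P + 5 * (P * Q)) * (a' + a + d) * (Z * W) := by
    calc _ = 2 * a * (2 * P + 3 * Q) * W * (X * Y ^ 2) + 2 * P * a' * W * X ^ 2
        + 5 * (P * Q) * d * W * Z := by rw [hZ]; ring
      _ ≤ 2 * a * (2 * P + 3 * Q) * W * Z + 2 * P * a' * W * Z
        + 5 * (P * Q) * d * W * Z := by gcongr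
      _ ≤ 2 * a * (2 * P + 3 * Q) * W * Z + 2 * P * a' * W * Z
        + 5 * (P * Q) * d * W * Z + (2 * (a' + d) * (2 * P + 3 * Q) * W * Z + 2 * P * (a + d) * W * Z
        + 5 * (P * Q) * (a + a') * W * Z) := le_add_of_nonneg_right (by positivity)
      _ = _ := by ring
  calc _ ≤ α ^ 2 * ((4 * P + 6 * Q + 2 * P + 5 * (P * Q)) * (a' + a + d) * (Z * W)) := by
        gcongr
        exact s1.trans s2
    _ = _ := by ring

section final

variable {S : Type} [MeasurableSpace S] {μ : Measure S} {f g : S → ℝ} {α c nf ng : ℝ}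

lemma exp_facts (hα1 : 1 < α) (hα2 : α < 2)
    (hf : MemLalpha α μ f) (hg : MemLalpha α μ g)
    (hN : ∀ u v : ℝ, c * |u| ^ α + c * |v| ^ α ≤ nrm α μ (fun s => u * f s + v * g s) ^ α)
    (hN0 : ∀ u v : ℝ, c * |u| ^ α + c * |v| ^ α ≤ nrm α μ (fun s => u * f s) ^ α +
      nrm α μ (fun s => v * g s) ^ α) (u v : ℝ) :
    |Real.exp (-(nrm α μ (fun s => u * f s + v * g s) ^ α))| ≤
      Real.exp (-(c * |u| ^ α)) * Real.exp (-(c * |v| ^ α)) ∧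
    |Real.exp (-(nrm α μ (fun s => u * f s + v * g s) ^ α)) -
      Real.exp (-(nrm α μ (fun s => u * f s) ^ α) - nrm α μ (fun s => v * g s) ^ α)| ≤
      5 * ((1 + |u|) * (1 + |v|)) * dep2 α μ f g *
        (Real.exp (-(c * |u| ^ α)) * Real.exp (-(c * |v| ^ α))) := by
  have hW : Real.exp (-(c * |u| ^ α)) * Real.exp (-(c * |v| ^ α)) =
      Real.exp (-(c * |u| ^ α + c * |v| ^ α)) := by
    rw [← Real.exp_add]; ring_nf
  rw [hW]
  constructor
  · rw [abs_of_pos (Real.exp_pos _)]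
    exact Real.exp_le_exp.2 (by linarith [hN u v])
  · rw [← neg_add']
    refine (abs_exp_sub_le (hN u v) (hN0 u v)).trans ?_
    gcongr
    refine (N_diff hα1 hα2 hf hg u v).trans ?_
    have h1 : |u| ^ (α / 2) ≤ 1 + |u| := abs_rpow_le_one_add (by linarith) (by linarith)
    have h2 : |v| ^ (α / 2) ≤ 1 + |v| := abs_rpow_le_one_add (by linarith) (by linarith)
    have := dep2_nonneg (α := α) (μ := μ) f g
    gcongr

lemma W_le {M : ℝ} (hM0 : 0 < M)
    (hM : ∀ u : ℝ, (1 + |u|) ^ 2 * Real.exp (-(c * |u| ^ α)) ≤ M * (1 + u ^ 2)⁻¹) (u v : ℝ) :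
    (1 + |u|) ^ 2 * (1 + |v|) ^ 2 * (Real.exp (-(c * |u| ^ α)) * Real.exp (-(c * |v| ^ α))) ≤
      M ^ 2 * ((1 + u ^ 2)⁻¹ * (1 + v ^ 2)⁻¹) := by
  have := mul_le_mul (hM u) (hM v) (by positivity) (by positivity)
  calc _ = ((1 + |u|) ^ 2 * Real.exp (-(c * |u| ^ α))) *
        ((1 + |v|) ^ 2 * Real.exp (-(c * |v| ^ α))) := by ring
    _ ≤ _ := this
    _ = _ := by ring

lemma D1_le {M : ℝ} (hM0 : 0 < M) (hα1 : 1 < α) (hα2 : α < 2)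
    (hf : MemLalpha α μ f) (hg : MemLalpha α μ g) (hnf : 0 < nf) (hfn : nrm α μ f = nf)
    (hN : ∀ u v : ℝ, c * |u| ^ α + c * |v| ^ α ≤ nrm α μ (fun s => u * f s + v * g s) ^ α)
    (hN0 : ∀ u v : ℝ, c * |u| ^ α + c * |v| ^ α ≤ nrm α μ (fun s => u * f s) ^ α +
      nrm α μ (fun s => v * g s) ^ α)
    (hM : ∀ u : ℝ, (1 + |u|) ^ 2 * Real.exp (-(c * |u| ^ α)) ≤ M * (1 + u ^ 2)⁻¹) (u v : ℝ) :
    |D1 α μ f g u v| ≤ α * (2 + 5 * nf ^ α) * M ^ 2 * (dep1s α μ g f + dep2 α μ f g) *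
      ((1 + u ^ 2)⁻¹ * (1 + v ^ 2)⁻¹) := by
  obtain ⟨x1, x2⟩ := exp_facts hα1 hα2 hf hg hN hN0 u v
  have hu := abs_nonneg u
  have hv := abs_nonneg v
  have d1 := dep1s_nonneg (α := α) (μ := μ) g f
  have d2 := dep2_nonneg (α := α) (μ := μ) f g
  have hu1 : |u| ^ (α - 1) ≤ 1 + |u| := abs_rpow_le_one_add (by linarith) (by linarith)
  have hv1 : |v| ^ (α - 1) ≤ 1 + |v| := abs_rpow_le_one_add (by linarith) (by linarith)
  unfold D1
  refine (alg_D1 (X := 1 + |u|) (Y := 1 + |v|) hα1 (by linarith) (by linarith) d1 d2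
    (by positivity : 0 ≤ nf ^ α) (by positivity)
    ((I_diff hα1 hα2 hf hg u v).trans (by gcongr))
    ((I_self hα1 hf u).trans (by rw [hfn]; gcongr)) x1 x2).trans ?_
  have := W_le hM0 hM u v
  calc _ ≤ α * (2 + 5 * nf ^ α) * (dep1s α μ g f + dep2 α μ f g) *
        (M ^ 2 * ((1 + u ^ 2)⁻¹ * (1 + v ^ 2)⁻¹)) := by gcongr
    _ = _ := by ring

lemma D2_le {M : ℝ} (hM0 : 0 < M) (hα1 : 1 < α) (hα2 : α < 2)
    (hf : MemLalpha α μ f) (hg : MemLalpha α μ g) (hnf : 0 < nf) (hfn : nrm α μ f = nf)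
    (hng : 0 < ng) (hgn : nrm α μ g = ng)
    (hN : ∀ u v : ℝ, c * |u| ^ α + c * |v| ^ α ≤ nrm α μ (fun s => u * f s + v * g s) ^ α)
    (hN0 : ∀ u v : ℝ, c * |u| ^ α + c * |v| ^ α ≤ nrm α μ (fun s => u * f s) ^ α +
      nrm α μ (fun s => v * g s) ^ α) (hc : 0 < c)
    (hM : ∀ u : ℝ, (1 + |u|) ^ 2 * Real.exp (-(c * |u| ^ α)) ≤ M * (1 + u ^ 2)⁻¹) (u v : ℝ) :
    |D2 α μ f g u v| ≤ 2 * |∫ s, (if f s = 0 ∨ g s = 0 then (0:ℝ) else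
        |u * f s + v * g s| ^ (α - 2) * (f s * g s)) ∂μ| +
      α ^ 2 * (4 * nf ^ α + 6 * ng ^ α + 2 * nf ^ α + 5 * (nf ^ α * ng ^ α)) * M ^ 2 *
        (dep1 α μ f g + dep2 α μ f g) * ((1 + u ^ 2)⁻¹ * (1 + v ^ 2)⁻¹) := by
  obtain ⟨x1, x2⟩ := exp_facts hα1 hα2 hf hg hN hN0 u v
  have hu := abs_nonneg u
  have hv := abs_nonneg v
  have d1 := dep1s_nonneg (α := α) (μ := μ) g f
  have d1' := dep1s_nonneg (α := α) (μ := μ) f g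
  have d2 := dep2_nonneg (α := α) (μ := μ) f g
  have hle := dep1s_le hα1 hf hg
  rw [hfn, hgn] at hle
  have hu1 : |u| ^ (α - 1) ≤ 1 + |u| := abs_rpow_le_one_add (by linarith) (by linarith)
  have hv1 : |v| ^ (α - 1) ≤ 1 + |v| := abs_rpow_le_one_add (by linarith) (by linarith)
  have hJ := I_diff hα1 hα2 hg hf v u
  have hJ' : ∀ s, v * g s + u * f s = u * f s + v * g s := fun s => add_comm _ _
  simp_rw [hJ'] at hJ
  have key := alg_D2 (α := α) (X := 1 + |u|) (Y := 1 + |v|) (by linarith) (by linarith) d1 d1' d2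
    (by positivity : 0 ≤ nf ^ α) (by positivity : 0 ≤ ng ^ α) (by positivity) hle
    ((I_diff hα1 hα2 hf hg u v).trans (by gcongr))
    ((I_self hα1 hf u).trans (by rw [hfn]; gcongr))
    (hJ.trans (by gcongr))
    ((I_self hα1 hg v).trans (by rw [hgn]; gcongr)) x1 x2
  unfold D2 dep1
  rw [add_sub_assoc]
  refine (abs_add_le _ _).trans (add_le_add ?_ (key.trans ?_))
  · rw [abs_mul, abs_mul, abs_neg, abs_of_pos (by nlinarith : 0 < α * (α - 1))]
    have b1 : α * (α - 1) ≤ 2 := by nlinarith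
    have b2 : |Real.exp (-(nrm α μ (fun s => u * f s + v * g s) ^ α))| ≤ 1 := by
      rw [abs_of_pos (Real.exp_pos _)]
      apply Real.exp_le_one_iff.2
      have := hN u v
      have : 0 ≤ c * |u| ^ α + c * |v| ^ α := by positivity
      linarith
    set I := |∫ s, (if f s = 0 ∨ g s = 0 then (0:ℝ) else
        |u * f s + v * g s| ^ (α - 2) * (f s * g s)) ∂μ|
    have hI : 0 ≤ I := abs_nonneg _
    calc _ ≤ 2 * I * 1 := by gcongr
      _ = _ := by ring
  · have := W_le hM0 hM u v
    calc _ ≤ α ^ 2 * (4 * nf ^ α + 6 * ng ^ α + 2 * nf ^ α + 5 * (nf ^ α * ng ^ α)) *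
          (dep1s α μ f g + dep1s α μ g f + dep2 α μ f g) *
          (M ^ 2 * ((1 + u ^ 2)⁻¹ * (1 + v ^ 2)⁻¹)) := by gcongr
      _ = _ := by ring

end final

theorem stmt10 (α β ε₁ ε₂ nf ng : ℝ) (hα1 : 1 < α) (hα2 : α < 2)
    (hβ0 : 0 < β) (hβ : β < α / 2) (hε₁ : 0 < ε₁) (hε₂ : 0 < ε₂)
    (hnf : 0 < nf) (hng : 0 < ng) :
    ∃ C > (0:ℝ), ∀ (S : Type) [MeasurableSpace S] (μ : Measure S) [SigmaFinite μ]
      (f g : S → ℝ), MemLalpha α μ f → MemLalpha α μ g →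
      nrm α μ f = nf → nrm α μ g = ng → A1 α ε₁ μ f g → A2 α ε₂ μ f g →
      ∀ b : ℝ, 1 ≤ b →
        (∫⁻ u : ℝ, ∫⁻ v : ℝ, ENNReal.ofReal (|D1 α μ f g u v| *
            (if |u| < 1 / b then |u| ^ (-β) else b ^ (β - 1) * |u|⁻¹))
          ≤ ENNReal.ofReal (C * b ^ (β - 1) * Real.log (b + 1) *
              (dep1s α μ g f + dep2 α μ f g))) ∧
        (∫⁻ u : ℝ, ∫⁻ v : ℝ, ENNReal.ofReal (|D2 α μ f g u v| *
            (if |u| < 1 / b then |u| ^ (-β) else b ^ (β - 1) * |u|⁻¹) *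
            (if |v| < 1 / b then |v| ^ (-β) else b ^ (β - 1) * |v|⁻¹))
          ≤ ENNReal.ofReal (C * b ^ (2 * β - α) *
              (dep1 α μ f g + dep2 α μ f g))) := by
  set c := min ε₂ 1 * min (nf ^ α) (ng ^ α) with hc
  have hnfa : 0 < nf ^ α := by positivity
  have hnga : 0 < ng ^ α := by positivity
  have hm1 : 0 < min ε₂ 1 := lt_min hε₂ one_pos
  have hm2 : 0 < min (nf ^ α) (ng ^ α) := lt_min hnfa hnga
  have hc0 : 0 < c := mul_pos hm1 hm2
  obtain ⟨M, hM0, hM⟩ := exists_decay hα1 hc0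
  obtain ⟨C3, hC3, hL3⟩ := lint_L3 (β := β) (by linarith)
  have hPt : ∫⁻ t : ℝ, ENNReal.ofReal ((1 + t ^ 2)⁻¹) ≠ ⊤ :=
    integrable_inv_one_add_sq.lintegral_lt_top.ne
  have hQt := lint_L4 (p := α / 2) (by linarith) (by linarith)
  have hRt := lint_L2_one hα1 hα2 hβ
  have hKt := lint_L1 (p := α / 2) (q := 2 - α) (by linarith) (by linarith) (by linarith)
    (by linarith) (by linarith)
  obtain ⟨P, hP0, hP⟩ : ∃ P : ℝ, 0 ≤ P ∧ ∫⁻ t : ℝ, ENNReal.ofReal ((1 + t ^ 2)⁻¹) = ENNReal.ofReal P :=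
    ⟨_, ENNReal.toReal_nonneg, (ENNReal.ofReal_toReal hPt).symm⟩
  obtain ⟨Q, hQ0, hQ⟩ : ∃ P : ℝ, 0 ≤ P ∧
      ∫⁻ t : ℝ, ENNReal.ofReal (|t| ^ (-(α / 2)) * (1 + t ^ 2)⁻¹) = ENNReal.ofReal P :=
    ⟨_, ENNReal.toReal_nonneg, (ENNReal.ofReal_toReal hQt).symm⟩
  obtain ⟨R, hR0, hR⟩ : ∃ P : ℝ, 0 ≤ P ∧
      ∫⁻ v, ENNReal.ofReal (Fw β 1 v * |v| ^ (α / 2 - 1)) = ENNReal.ofReal P :=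
    ⟨_, ENNReal.toReal_nonneg, (ENNReal.ofReal_toReal hRt).symm⟩
  obtain ⟨K, hK0, hK⟩ : ∃ P : ℝ, 0 ≤ P ∧
      ∫⁻ t : ℝ, ENNReal.ofReal (|t| ^ (-(α / 2)) * |t + 1| ^ (-(2 - α))) = ENNReal.ofReal P :=
    ⟨_, ENNReal.toReal_nonneg, (ENNReal.ofReal_toReal hKt).symm⟩
  set k1 := α * (2 + 5 * nf ^ α) * M ^ 2 with hk1
  set k2 := α ^ 2 * (4 * nf ^ α + 6 * ng ^ α + 2 * nf ^ α + 5 * (nf ^ α * ng ^ α)) * M ^ 2 with hk2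
  have hk10 : 0 < k1 := by positivity
  have hk20 : 0 < k2 := by positivity
  refine ⟨1 + k1 * P * C3 + k2 * Q ^ 2 + 2 * (R * K), by positivity, ?_⟩
  intro S _ μ _ f g hf hg hfn hgn _ hA2 b hb
  have hb0 : 0 < b := by linarith
  have hN : ∀ u v : ℝ, c * |u| ^ α + c * |v| ^ α ≤ nrm α μ (fun s => u * f s + v * g s) ^ α := by
    intro u v
    refine le_trans ?_ (hA2 u v)
    rw [hfn, hgn, hc]
    have h1 := min_le_left ε₂ 1
    have h2 := min_le_left (nf ^ α) (ng ^ α)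
    have h3 := min_le_right (nf ^ α) (ng ^ α)
    calc _ = min ε₂ 1 * (|u| ^ α * min (nf ^ α) (ng ^ α) + |v| ^ α * min (nf ^ α) (ng ^ α)) := by ring
      _ ≤ _ := by gcongr
  have hN0 : ∀ u v : ℝ, c * |u| ^ α + c * |v| ^ α ≤ nrm α μ (fun s => u * f s) ^ α +
      nrm α μ (fun s => v * g s) ^ α := by
    intro u v
    rw [nrm_const_rpow hα1, nrm_const_rpow hα1, hfn, hgn, hc]
    have h1 := min_le_right ε₂ 1
    have h2 := min_le_left (nf ^ α) (ng ^ α)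
    have h3 := min_le_right (nf ^ α) (ng ^ α)
    calc _ = min ε₂ 1 * (|u| ^ α * min (nf ^ α) (ng ^ α) + |v| ^ α * min (nf ^ α) (ng ^ α)) := by ring
      _ ≤ 1 * (|u| ^ α * (nf ^ α) + |v| ^ α * ng ^ α) := by gcongr
      _ = _ := by ring
  have d1 := dep1s_nonneg (α := α) (μ := μ) g f
  have d1' := dep1s_nonneg (α := α) (μ := μ) f g
  have d2 := dep2_nonneg (α := α) (μ := μ) f g
  have hF0 := Fw_nonneg (β := β) hb
  have mF := measurable_Fw β b
  have hlog : 0 < Real.log (b + 1) := Real.log_pos (by linarith)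
  have hFw : ∀ u : ℝ, (if |u| < 1 / b then |u| ^ (-β) else b ^ (β - 1) * |u|⁻¹) = Fw β b u :=
    fun u => rfl
  simp_rw [hFw]
  -- product integral
  have prodint : ∀ (k : ℝ) (A B : ℝ → ℝ), 0 ≤ k → (∀ u, 0 ≤ A u) → (∀ u, 0 ≤ B u) →
      Measurable A → Measurable B →
      ∫⁻ u, ∫⁻ v, ENNReal.ofReal (k * (A u * B v)) =
        ENNReal.ofReal k * ((∫⁻ u, ENNReal.ofReal (A u)) * ∫⁻ v, ENNReal.ofReal (B v)) := by
    intro k A B hk hA hB mA mB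
    rw [← lintegral_mul_const _ (by fun_prop), ← lintegral_const_mul _ (by fun_prop)]
    apply lintegral_congr
    intro u
    rw [← lintegral_const_mul _ (by fun_prop), ← lintegral_const_mul _ (by fun_prop)]
    apply lintegral_congr
    intro v
    rw [ENNReal.ofReal_mul hk, ENNReal.ofReal_mul (hA u)]
  constructor
  · set d := dep1s α μ g f + dep2 α μ f g with hd
    have hd0 : 0 ≤ d := by positivity
    calc _ ≤ ∫⁻ u, ∫⁻ v : ℝ, ENNReal.ofReal ((k1 * d) * ((Fw β b u * (1 + u ^ 2)⁻¹) * (1 + v ^ 2)⁻¹)) := by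
          refine lintegral_mono fun u => lintegral_mono fun v => ENNReal.ofReal_le_ofReal ?_
          have := D1_le hM0 hα1 hα2 hf hg hnf hfn hN hN0 hM u v
          rw [← hk1, ← hd] at this
          have h0 := hF0 u
          calc _ ≤ k1 * d * ((1 + u ^ 2)⁻¹ * (1 + v ^ 2)⁻¹) * Fw β b u := by gcongr
            _ = _ := by ring
      _ = ENNReal.ofReal (k1 * d) * ((∫⁻ u, ENNReal.ofReal (Fw β b u * (1 + u ^ 2)⁻¹)) *
          ENNReal.ofReal P) := by
          rw [prodint _ (fun u => Fw β b u * (1 + u ^ 2)⁻¹) (fun v => (1 + v ^ 2)⁻¹) (by positivity)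
            (fun u => mul_nonneg (hF0 u) (by positivity)) (fun u => by positivity) (by fun_prop)
            (by fun_prop), hP]
      _ ≤ ENNReal.ofReal (k1 * d) * (ENNReal.ofReal (C3 * b ^ (β - 1) * Real.log (b + 1)) *
          ENNReal.ofReal P) := by
          gcongr
          exact hL3 b hb
      _ = ENNReal.ofReal ((k1 * P * C3) * (b ^ (β - 1) * Real.log (b + 1) * d)) := by
          rw [← ENNReal.ofReal_mul (by positivity), ← ENNReal.ofReal_mul (by positivity)]
          congr 1; ring
      _ ≤ _ := by
          apply ENNReal.ofReal_le_ofReal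
          calc _ ≤ (1 + k1 * P * C3 + k2 * Q ^ 2 + 2 * (R * K)) *
                (b ^ (β - 1) * Real.log (b + 1) * d) := by
                gcongr
                have : 0 ≤ k2 * Q ^ 2 := by positivity
                have : 0 ≤ R * K := by positivity
                linarith
            _ = _ := by ring
  · set d := dep1 α μ f g + dep2 α μ f g with hd
    have hdd : dep2 α μ f g ≤ d := by rw [hd]; unfold dep1; linarith
    have hd0 : 0 ≤ d := d2.trans hdd
    set bb := b ^ (β - α / 2) with hbb
    have hbb0 : 0 ≤ bb := by positivity
    have hb2 : b ^ (2 * β - α) = bb * bb := by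
      rw [hbb, ← Real.rpow_add hb0]; ring_nf
    set I : ℝ → ℝ → ℝ := fun u v => |∫ s, (if f s = 0 ∨ g s = 0 then (0:ℝ) else
        |u * f s + v * g s| ^ (α - 2) * (f s * g s)) ∂μ| with hI
    have hI0 : ∀ u v, 0 ≤ I u v := fun u v => abs_nonneg _
    set B : ℝ → ℝ → ℝ≥0∞ := fun u v => ENNReal.ofReal ((k2 * d) *
      ((Fw β b u * (1 + u ^ 2)⁻¹) * (Fw β b v * (1 + v ^ 2)⁻¹))) with hB
    have mB : Measurable (fun p : ℝ × ℝ => B p.1 p.2) := by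
      simp only [hB]; fun_prop
    calc _ ≤ ∫⁻ u, ∫⁻ v, (2 * (ENNReal.ofReal (I u v) *
          (ENNReal.ofReal (Fw β b u) * ENNReal.ofReal (Fw β b v))) + B u v) := by
          gcongr with u v
          have := D2_le hM0 hα1 hα2 hf hg hnf hfn hng hgn hN hN0 hc0 hM u v
          rw [← hk2, ← hd] at this
          have h0 := hF0 u
          have h1 := hF0 v
          have h2 := hI0 u v
          simp only [hB]
          rw [show (2:ℝ≥0∞) = ENNReal.ofReal 2 by simp, ← ENNReal.ofReal_mul h0,
            ← ENNReal.ofReal_mul h2, ← ENNReal.ofReal_mul (by norm_num),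
            ← ENNReal.ofReal_add (by positivity) (by positivity)]
          apply ENNReal.ofReal_le_ofReal
          calc _ ≤ (2 * I u v + k2 * d * ((1 + u ^ 2)⁻¹ * (1 + v ^ 2)⁻¹)) * Fw β b u * Fw β b v := by
                gcongr
            _ = _ := by ring
      _ = 2 * (∫⁻ u, ∫⁻ v, (ENNReal.ofReal (I u v) *
          (ENNReal.ofReal (Fw β b u) * ENNReal.ofReal (Fw β b v)))) + ∫⁻ u, ∫⁻ v, B u v := by
          rw [← lintegral_const_mul' _ _ (by simp), ← lintegral_add_right]
          · apply lintegral_congr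
            intro u
            have mBu : Measurable (fun v => B u v) :=
              mB.comp (f := fun v : ℝ => (u, v)) (by fun_prop)
            rw [lintegral_add_right _ mBu, lintegral_const_mul' _ _ (by simp)]
          · exact mB.lintegral_prod_right'
      _ ≤ 2 * (ENNReal.ofReal bb * (ENNReal.ofReal bb * ENNReal.ofReal R * ENNReal.ofReal K *
            ENNReal.ofReal (dep2 α μ f g))) +
          ENNReal.ofReal (k2 * d) * ((ENNReal.ofReal bb * ENNReal.ofReal Q) *
            (ENNReal.ofReal bb * ENNReal.ofReal Q)) := by
          gcongr
          · rw [← hR, ← hK]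
            exact T1_le hα1 hα2 hβ hb hf hg
          · simp only [hB]
            rw [prodint _ (fun u => Fw β b u * (1 + u ^ 2)⁻¹) (fun u => Fw β b u * (1 + u ^ 2)⁻¹)
              (by positivity) (fun u => mul_nonneg (hF0 u) (by positivity))
              (fun u => mul_nonneg (hF0 u) (by positivity)) (by fun_prop) (by fun_prop)]
            have := lint_L5 hα2 hβ hb
            rw [hQ] at this
            gcongr
      _ = ENNReal.ofReal (2 * (bb * (bb * R * K * dep2 α μ f g)) +
          k2 * d * ((bb * Q) * (bb * Q))) := by
          rw [ENNReal.ofReal_add (by positivity) (by positivity),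
            ENNReal.ofReal_mul (p := 2) (by positivity), ENNReal.ofReal_mul (p := bb) (by positivity),
            ENNReal.ofReal_mul (p := bb * R * K) (by positivity),
            ENNReal.ofReal_mul (p := bb * R) (by positivity),
            ENNReal.ofReal_mul (p := bb) (by positivity),
            ENNReal.ofReal_mul (p := k2 * d) (by positivity),
            ENNReal.ofReal_mul (p := bb * Q) (by positivity),
            ENNReal.ofReal_mul (p := bb) (by positivity)]
          simp
      _ ≤ _ := by
          apply ENNReal.ofReal_le_ofReal
          rw [hb2]
          calc _ ≤ 2 * (bb * (bb * R * K * d)) + k2 * d * ((bb * Q) * (bb * Q)) := by gcongr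
            _ = (k2 * Q ^ 2 + 2 * (R * K)) * (bb * bb * d) := by ring
            _ ≤ (1 + k1 * P * C3 + k2 * Q ^ 2 + 2 * (R * K)) * (bb * bb * d) := by
                gcongr
                have : 0 ≤ k1 * P * C3 := by positivity
                linarith
            _ = _ := by ring
end

section
/- Let β ∈ (0,1), b ≥ 1, and let K: ℝ → ℝ satisfy Assumption (K1) with exponent β and threshold x₀ = b and Assumption (K2) with threshold x₀ = b. For n ∈ ℕ set K_{b,n}(x) := K(x)·1_{{b < |x| ≤ n}}. Then: (i) for every u ≠ 0 the limit φ_b(u) := lim_{n→∞} (1/2π) ∫_ℝ e^{−ixu} K_{b,n}(x)/x dx exists, and there is a constant C, not depending on b, n or u, such that |φ_b(u)| ≤ C|u|^{−β} for 0 < |u| < 1/b and |φ_b(u)| ≤ C b^{β−1}|u|^{−1} for all u ≠ 0; (ii) for each fixed b there is a constant C', not depending on n or u, such that |(1/2π) ∫_ℝ e^{−ixu} K_{b,n}(x)/x dx| ≤ C'|u|^{−β} for 0 < |u| < 1/b and ≤ C'|u|^{−1} for all u ≠ 0. (Paper's Lemma 4.1 together with the limit relation (4.12).) -/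
open MeasureTheory Real Set Filter
open scoped ENNReal Topology

/-- Positive-side kernel conditions. -/
def HG (β c s : ℝ) (g : ℝ → ℝ) : Prop :=
  AntitoneOn g (Set.Ioi s) ∧ ∀ x, s < x → 0 ≤ g x ∧ g x ≤ c * x ^ (β - 1)

noncomputable def GG (g : ℝ → ℝ) (s t : ℝ) (x : ℝ) : ℝ := if s < x ∧ x ≤ t then g x else 0

noncomputable def EE (u x : ℝ) : ℂ := Complex.exp (-(Complex.I * (x : ℂ) * (u : ℂ)))

noncomputable def JJ (g : ℝ → ℝ) (s t u : ℝ) : ℂ := ∫ x : ℝ, EE u x * ((GG g s t x : ℝ) : ℂ)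

lemma EE_norm (u x : ℝ) : ‖EE u x‖ = 1 := by
  unfold EE
  rw [Complex.norm_exp]; simp

lemma EE_cont (u : ℝ) : Continuous (EE u) := by
  unfold EE; fun_prop

lemma EE_shift (u x : ℝ) (hu : u ≠ 0) : EE u (x + π / |u|) = - EE u x := by
  unfold EE
  rcases lt_or_gt_of_ne hu with h | h
  · have hc : (u : ℂ) ≠ 0 := by exact_mod_cast hu
    have : -(Complex.I * ((x + π / |u| : ℝ) : ℂ) * (u : ℂ))
        = -(Complex.I * (x : ℂ) * (u : ℂ)) + π * Complex.I := by
      rw [abs_of_neg h]; push_cast; field_simp; ring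
    rw [this, Complex.exp_add, Complex.exp_pi_mul_I]; ring
  · have hc : (u : ℂ) ≠ 0 := by exact_mod_cast hu
    have : -(Complex.I * ((x + π / |u| : ℝ) : ℂ) * (u : ℂ))
        = -(Complex.I * (x : ℂ) * (u : ℂ)) + -(π * Complex.I) := by
      rw [abs_of_pos h]; push_cast; field_simp; ring
    rw [this, Complex.exp_add, Complex.exp_neg (π * Complex.I), Complex.exp_pi_mul_I]
    norm_num

lemma EE_int (u : ℝ) {G : ℝ → ℝ} (hG : Integrable G) :
    Integrable (fun x => EE u x * ((G x : ℝ) : ℂ)) := by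
  refine Integrable.bdd_mul (c := 1) hG.ofReal (EE_cont u).aestronglyMeasurable ?_
  exact ae_of_all _ fun x => (EE_norm u x).le

lemma core (u s M : ℝ) (hu : u ≠ 0) (G : ℝ → ℝ) (hG : Integrable G)
    (h0 : ∀ x, x ≤ s → G x = 0) (hanti : AntitoneOn G (Set.Ioi s))
    (hnn : ∀ x, 0 ≤ G x) (hM : ∀ x, G x ≤ M) :
    ‖∫ x : ℝ, EE u x * ((G x : ℝ) : ℂ)‖ ≤ π * M / |u| := by
  set h := π / |u| with hh
  have hpos : 0 < h := div_pos Real.pi_pos (abs_pos.mpr hu)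
  have hGs : Integrable (fun x => G (x + h)) := hG.comp_add_right h
  have e1 : ∫ x : ℝ, EE u x * ((G x : ℝ) : ℂ)
      = - ∫ x : ℝ, EE u x * ((G (x + h) : ℝ) : ℂ) := by
    rw [← integral_add_right_eq_self (fun x => EE u x * ((G x : ℝ) : ℂ)) h, ← integral_neg]
    congr 1; ext x
    rw [EE_shift u x hu]; ring
  have e2 : (2 : ℂ) * ∫ x : ℝ, EE u x * ((G x : ℝ) : ℂ)
      = ∫ x : ℝ, EE u x * ((G x - G (x + h) : ℝ) : ℂ) := by
    have : ∫ x : ℝ, EE u x * ((G x - G (x + h) : ℝ) : ℂ)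
      = (∫ x : ℝ, EE u x * ((G x : ℝ) : ℂ)) - ∫ x : ℝ, EE u x * ((G (x + h) : ℝ) : ℂ) := by
      rw [← integral_sub (EE_int u hG) (EE_int u hGs)]
      congr 1; ext x; push_cast; ring
    rw [this, two_mul]
    nth_rewrite 2 [e1]
    ring
  have e3 : ‖∫ x : ℝ, EE u x * ((G x - G (x + h) : ℝ) : ℂ)‖ ≤ ∫ x : ℝ, |G x - G (x + h)| := by
    refine (norm_integral_le_integral_norm _).trans_eq ?_
    congr 1; ext x
    rw [norm_mul, EE_norm, one_mul, Complex.norm_real, Real.norm_eq_abs]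
  have hint : Integrable (fun x => |G x - G (x + h)|) := (hG.sub hGs).abs
  -- pointwise: |G x - G (x+h)| = G x - G (x+h) + 2 * (G (x+h)) on x ≤ s
  have hpt : ∀ x, |G x - G (x + h)|
      ≤ (G x - G (x + h)) + 2 * M * (Set.indicator (Set.Ioc (s - h) s) (fun _ => (1:ℝ)) x) := by
    intro x
    by_cases hx : s < x
    · have : G (x + h) ≤ G x := hanti (by exact hx) (by show s < x + h; linarith) (by linarith)
      rw [abs_of_nonneg (by linarith), Set.indicator_of_notMem (by simp; intro _; exact hx)]
      linarith
    · push Not at hx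
      rw [h0 x hx]
      by_cases hx2 : s - h < x
      · rw [Set.indicator_of_mem (show x ∈ Set.Ioc (s - h) s from ⟨hx2, hx⟩), abs_of_nonpos (by linarith [hnn (x + h)])]
        linarith [hM (x + h)]
      · rw [h0 (x + h) (by linarith), Set.indicator_of_notMem (by simp; intro h'; linarith)]
        simp
  have hind : Integrable (Set.indicator (Set.Ioc (s - h) s) (fun _ => (1:ℝ))) :=
    (integrable_indicator_iff measurableSet_Ioc).mpr (by simp)
  have e4 : ∫ x : ℝ, |G x - G (x + h)| ≤ 2 * M * h := by
    refine (integral_mono hint ((hG.sub hGs).add (hind.const_mul (2 * M))) hpt).trans_eq ?_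
    rw [integral_add' (hG.sub hGs) (hind.const_mul (2 * M)), integral_sub' hG hGs,
      integral_add_right_eq_self G h, integral_const_mul,
      integral_indicator measurableSet_Ioc]
    simp [hpos.le]
  have e5 : 2 * ‖∫ x : ℝ, EE u x * ((G x : ℝ) : ℂ)‖ ≤ 2 * M * h := by
    have := e3.trans e4
    rw [← e2, norm_mul] at this
    simpa using this
  have : π * M / |u| = M * h := by rw [hh]; ring
  rw [this]; linarith

lemma HG.mono {β c s r : ℝ} {g : ℝ → ℝ} (H : HG β c s g) (h : s ≤ r) : HG β c r g :=
  ⟨H.1.mono (Set.Ioi_subset_Ioi h), fun x hx => H.2 x (h.trans_lt hx)⟩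

lemma HG.le {β c s : ℝ} {g : ℝ → ℝ} (H : HG β c s g) (hβ1 : β < 1) (hc : 0 ≤ c) (hs : 0 < s)
    (x : ℝ) (hx : s < x) : g x ≤ c * s ^ (β - 1) :=
  (H.2 x hx).2.trans (mul_le_mul_of_nonneg_left
    (Real.rpow_le_rpow_of_nonpos hs hx.le (by linarith)) hc)

lemma GG_eq (g : ℝ → ℝ) (s t : ℝ) : GG g s t = Set.indicator (Set.Ioc s t) g := by
  ext x; simp [GG, Set.indicator]

lemma GG_int {β c s : ℝ} {g : ℝ → ℝ} (H : HG β c s g) (hβ1 : β < 1) (hc : 0 ≤ c) (hs : 0 < s)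
    (t : ℝ) : Integrable (GG g s t) := by
  rw [GG_eq, integrable_indicator_iff measurableSet_Ioc]
  have hm : AEMeasurable g (volume.restrict (Set.Ioc s t)) :=
    aemeasurable_restrict_of_antitoneOn measurableSet_Ioc (H.1.mono fun x hx => hx.1)
  refine Integrable.of_bound hm.aestronglyMeasurable (c * s ^ (β - 1)) ?_
  refine (ae_restrict_iff' measurableSet_Ioc).mpr (ae_of_all _ fun x hx => ?_)
  rw [Real.norm_eq_abs, abs_of_nonneg (H.2 x hx.1).1]
  exact H.le hβ1 hc hs x hx.1

lemma J1 {β c s : ℝ} {g : ℝ → ℝ} (H : HG β c s g) (hβ1 : β < 1) (hc : 0 ≤ c) (hs : 0 < s)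
    (t u : ℝ) (hu : u ≠ 0) : ‖JJ g s t u‖ ≤ π * (c * s ^ (β - 1)) / |u| := by
  have hnn : 0 ≤ c * s ^ (β - 1) := mul_nonneg hc (Real.rpow_nonneg hs.le _)
  refine core u s _ hu _ (GG_int H hβ1 hc hs t) ?_ ?_ ?_ ?_
  · intro x hx; simp [GG, not_lt.mpr hx]
  · intro x hx y hy hxy
    have hx' : s < x := hx
    have hy' : s < y := hy
    simp only [GG, hx', hy', true_and]
    split_ifs with h1 h2 h2
    · exact H.1 hx hy hxy
    · exact absurd (hxy.trans h1) h2
    · exact (H.2 x hx).1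
    · exact le_rfl
  · intro x; unfold GG; split_ifs with h
    · exact (H.2 x h.1).1
    · exact le_rfl
  · intro x; unfold GG; split_ifs with h
    · exact H.le hβ1 hc hs x h.1
    · exact hnn

lemma J2 {β c s : ℝ} {g : ℝ → ℝ} (H : HG β c s g) (hβ1 : β < 1) (hc : 0 ≤ c) (hs : 0 < s)
    (r t u : ℝ) (hsr : s ≤ r) (hrt : r ≤ t) : JJ g s t u = JJ g s r u + JJ g r t u := by
  unfold JJ
  rw [← integral_add (EE_int u (GG_int H hβ1 hc hs r))
    (EE_int u (GG_int (H.mono hsr) hβ1 hc (hs.trans_le hsr) t))]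
  congr 1; ext x
  rw [← mul_add, ← Complex.ofReal_add]
  congr 2
  unfold GG
  by_cases h1 : s < x <;> by_cases h2 : x ≤ r <;> by_cases h3 : x ≤ t <;> by_cases h4 : r < x <;>
    simp [h1, h2, h3, h4] <;> (exfalso; linarith)

lemma J0 {β c s : ℝ} {g : ℝ → ℝ} (H : HG β c s g) (hβ0 : 0 < β) (hc : 0 ≤ c)
    (hs : 0 < s) (r t u : ℝ) (hr : 0 < r) (hrt : t ≤ r) : ‖JJ g s t u‖ ≤ c / β * r ^ β := by
  have hii : IntegrableOn (fun x : ℝ => c * x ^ (β - 1)) (Set.Ioc 0 r) := by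
    have := (intervalIntegral.intervalIntegrable_rpow' (a := 0) (b := r) (r := β - 1)
      (by linarith)).const_mul c
    exact (intervalIntegrable_iff_integrableOn_Ioc_of_le hr.le).mp this
  have : ‖JJ g s t u‖ ≤ ∫ x, Set.indicator (Set.Ioc 0 r) (fun x : ℝ => c * x ^ (β - 1)) x := by
    refine norm_integral_le_of_norm_le ((integrable_indicator_iff measurableSet_Ioc).mpr hii)
      (ae_of_all _ fun x => ?_)
    rw [norm_mul, EE_norm, one_mul, Complex.norm_real, Real.norm_eq_abs]
    unfold GG
    split_ifs with h
    · rw [Set.indicator_of_mem (show x ∈ Set.Ioc 0 r from ⟨hs.trans h.1, h.2.trans hrt⟩), abs_of_nonneg (H.2 x h.1).1]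
      exact (H.2 x h.1).2
    · rw [abs_zero]
      exact Set.indicator_nonneg (fun y hy => mul_nonneg hc (Real.rpow_nonneg hy.1.le _)) x
  refine this.trans_eq ?_
  rw [integral_indicator measurableSet_Ioc, ← intervalIntegral.integral_of_le hr.le,
    intervalIntegral.integral_const_mul, integral_rpow (Or.inl (by linarith))]
  rw [sub_add_cancel, Real.zero_rpow hβ0.ne', sub_zero]
  ring

lemma J3 {β c s : ℝ} {g : ℝ → ℝ} (H : HG β c s g) (hβ0 : 0 < β) (hβ1 : β < 1) (hc : 0 ≤ c)
    (hs : 0 < s) (t u : ℝ) (hu : u ≠ 0) (hus : |u| < 1 / s) :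
    ‖JJ g s t u‖ ≤ (c / β + π * c) * |u| ^ (-β) := by
  have hup := abs_pos.mpr hu
  set r := |u|⁻¹ with hr
  have hrp : 0 < r := inv_pos.mpr hup
  have hsr : s ≤ r := by
    rw [hr, le_inv_comm₀ hs hup, ← one_div]; exact hus.le
  have e1 : r ^ β = |u| ^ (-β) := by rw [hr, Real.inv_rpow hup.le, Real.rpow_neg hup.le]
  have hpi : 0 ≤ π * c := mul_nonneg Real.pi_pos.le hc
  have hU : 0 ≤ |u| ^ (-β) := Real.rpow_nonneg hup.le _
  have hpU := mul_nonneg hpi hU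
  rcases le_total t r with h | h
  · have := J0 H hβ0 hc hs r t u hrp h
    rw [e1] at this
    nlinarith
  · have a := J0 H hβ0 hc hs r r u hrp le_rfl
    have b := J1 (H.mono hsr) hβ1 hc hrp t u hu
    have e2 : π * (c * r ^ (β - 1)) / |u| = π * c * |u| ^ (-β) := by
      rw [← e1, Real.rpow_sub_one hrp.ne', hr]
      field_simp
    rw [J2 H hβ1 hc hs r t u hsr h]
    rw [e1] at a
    rw [e2] at b
    have := norm_add_le (JJ g s r u) (JJ g r t u)
    linarith

lemma Jlim {β c s : ℝ} {g : ℝ → ℝ} (H : HG β c s g) (hβ1 : β < 1) (hc : 0 ≤ c)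
    (hs : 0 < s) (u : ℝ) (hu : u ≠ 0) :
    ∃ l, Tendsto (fun n : ℕ => JJ g s (n : ℝ) u) atTop (𝓝 l) := by
  apply cauchySeq_tendsto_of_complete
  rw [Metric.cauchySeq_iff']
  intro ε hε
  have ht : Tendsto (fun n : ℕ => π * (c * (n : ℝ) ^ (β - 1)) / |u|) atTop (𝓝 0) := by
    have h1 : Tendsto (fun n : ℕ => (n : ℝ) ^ (-(1 - β))) atTop (𝓝 0) :=
      (tendsto_rpow_neg_atTop (by linarith)).comp tendsto_natCast_atTop_atTop
    have h2 := ((h1.const_mul c).const_mul π).div_const |u|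
    simpa using h2
  obtain ⟨N, hN1, hN2⟩ := ((ht.eventually (gt_mem_nhds hε)).and
    (tendsto_natCast_atTop_atTop.eventually (eventually_ge_atTop s))).exists
  refine ⟨N, fun n hn => ?_⟩
  rw [dist_eq_norm, J2 H hβ1 hc hs N n u hN2 (by exact_mod_cast hn), add_sub_cancel_left]
  exact (J1 (H.mono hN2) hβ1 hc (hs.trans_le hN2) n u hu).trans_lt hN1

lemma HG_of {β c b : ℝ} (hβ1 : β < 1) (hb : 0 < b) (g : ℝ → ℝ)
    (ha : AntitoneOn g (Set.Ioi b)) (hle : ∀ x, b < x → |g x| ≤ c * x ^ (β - 1)) :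
    HG β c b g := by
  refine ⟨ha, fun x hx => ⟨?_, (le_abs_self _).trans (hle x hx)⟩⟩
  have h1 : Tendsto (fun y : ℝ => -(c * y ^ (-(1 - β)))) atTop (𝓝 0) := by
    simpa using ((tendsto_rpow_neg_atTop (by linarith : 0 < 1 - β)).const_mul c).neg
  refine le_of_tendsto h1 ?_
  filter_upwards [eventually_ge_atTop x] with y hy
  have := ha hx (show b < y by linarith) hy
  have h2 := hle y (by linarith)
  rw [show -(1 - β) = β - 1 by ring]
  linarith [neg_abs_le (g y)]

lemma HG_K {β cK b : ℝ} (hβ1 : β < 1) (hb : 1 ≤ b) (K : ℝ → ℝ)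
    (hK : ∀ x : ℝ, b < |x| → |K x| ≤ cK * |x| ^ β)
    (h1 : AntitoneOn (fun x => K x / x) (Set.Ioi b))
    (h2 : MonotoneOn (fun x => K x / x) (Set.Iio (-b))) :
    HG β |cK| b (fun x => K x / x) ∧ HG β |cK| b (fun x => K (-x) / (-x)) := by
  have hb0 : 0 < b := by linarith
  have key : ∀ x : ℝ, b < |x| → |K x / x| ≤ |cK| * |x| ^ (β - 1) := by
    intro x hx
    have hx0 : 0 < |x| := by linarith
    rw [abs_div, Real.rpow_sub_one hx0.ne', ← mul_div_assoc]
    gcongr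
    exact (hK x hx).trans (by gcongr; exact le_abs_self _)
  constructor
  · refine HG_of hβ1 hb0 _ h1 fun x hx => ?_
    have := key x (hx.trans_le (le_abs_self x))
    rwa [abs_of_pos (hb0.trans hx)] at this
  · refine HG_of hβ1 hb0 _ ?_ fun x hx => ?_
    · intro x hx y hy hxy
      exact h2 (show -y < -b from neg_lt_neg hy) (show -x < -b from neg_lt_neg hx) (neg_le_neg hxy)
    · have := key (-x) (by rw [abs_neg]; exact hx.trans_le (le_abs_self x))
      rwa [abs_neg x, abs_of_pos (hb0.trans hx)] at this

lemma full {β c b : ℝ} (hβ1 : β < 1) (hc : 0 ≤ c) (hb : 0 < b) (K : ℝ → ℝ)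
    (H1 : HG β c b (fun x => K x / x)) (H2 : HG β c b (fun x => K (-x) / (-x))) (t u : ℝ) :
    (∫ x : ℝ, Complex.exp (-(Complex.I * (x : ℂ) * (u : ℂ))) *
      (((if b < |x| ∧ |x| ≤ t then K x else 0) / x : ℝ) : ℂ))
    = JJ (fun x => K x / x) b t u + JJ (fun x => K (-x) / (-x)) b t (-u) := by
  have i2 := EE_int (-u) (GG_int H2 hβ1 hc hb t)
  unfold JJ
  rw [← integral_neg_eq_self (fun x => EE (-u) x * ((GG (fun x => K (-x) / (-x)) b t x : ℝ) : ℂ)),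
    ← integral_add (EE_int u (GG_int H1 hβ1 hc hb t)) i2.comp_neg]
  congr 1; ext x
  have e : EE (-u) (-x) = EE u x := by unfold EE; push_cast; congr 1; ring
  rw [e, ← mul_add, ← Complex.ofReal_add]
  unfold EE
  congr 2
  unfold GG
  simp only [neg_neg]
  rcases le_total 0 x with hx | hx
  · rw [abs_of_nonneg hx, if_neg (c := b < -x ∧ -x ≤ t) (by rintro ⟨h, -⟩; linarith), add_zero]
    split_ifs <;> simp
  · rw [abs_of_nonpos hx, if_neg (c := b < x ∧ x ≤ t) (by rintro ⟨h, -⟩; linarith), zero_add]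
    split_ifs <;> simp

lemma two_pi_le (z : ℂ) : ‖((1 / (2 * Real.pi) : ℝ) : ℂ) * z‖ ≤ ‖z‖ := by
  rw [norm_mul, Complex.norm_real, Real.norm_eq_abs, abs_of_pos (by positivity)]
  have : 1 / (2 * π) ≤ 1 := by
    rw [div_le_one (by positivity)]; linarith [Real.two_le_pi]
  nlinarith [norm_nonneg z]

lemma bounds {β cK b : ℝ} (hβ0 : 0 < β) (hβ1 : β < 1) (hb : 1 ≤ b) (K : ℝ → ℝ)
    (hK : ∀ x : ℝ, b < |x| → |K x| ≤ cK * |x| ^ β)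
    (h1 : AntitoneOn (fun x => K x / x) (Set.Ioi b))
    (h2 : MonotoneOn (fun x => K x / x) (Set.Iio (-b))) (t u : ℝ) (hu : u ≠ 0) :
    (|u| < 1 / b → ‖((1 / (2 * Real.pi) : ℝ) : ℂ) * ∫ x : ℝ,
              Complex.exp (-(Complex.I * (x : ℂ) * (u : ℂ))) *
                (((if b < |x| ∧ |x| ≤ t then K x else 0) / x : ℝ) : ℂ)‖
            ≤ (2 * (|cK| / β + π * |cK|) + 1) * |u| ^ (-β)) ∧
    ‖((1 / (2 * Real.pi) : ℝ) : ℂ) * ∫ x : ℝ,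
              Complex.exp (-(Complex.I * (x : ℂ) * (u : ℂ))) *
                (((if b < |x| ∧ |x| ≤ t then K x else 0) / x : ℝ) : ℂ)‖
            ≤ (2 * (|cK| / β + π * |cK|) + 1) * b ^ (β - 1) * |u|⁻¹ := by
  have hb0 : 0 < b := by linarith
  have hc := abs_nonneg cK
  obtain ⟨H1, H2⟩ := HG_K hβ1 hb K hK h1 h2
  rw [full hβ1 hc hb0 K H1 H2]
  have hn := (two_pi_le (JJ (fun x => K x / x) b t u + JJ (fun x => K (-x) / (-x)) b t (-u))).trans
    (norm_add_le _ _)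
  have hu' := neg_ne_zero.mpr hu
  constructor
  · intro hub
    have a := J3 H1 hβ0 hβ1 hc hb0 t u hu hub
    have a' := J3 H2 hβ0 hβ1 hc hb0 t (-u) hu' (by rwa [abs_neg])
    rw [abs_neg u] at a'
    have : 0 ≤ |u| ^ (-β) := Real.rpow_nonneg (abs_nonneg u) _
    linarith
  · have a := J1 H1 hβ1 hc hb0 t u hu
    have a' := J1 H2 hβ1 hc hb0 t (-u) hu'
    rw [abs_neg u] at a'
    have e : π * (|cK| * b ^ (β - 1)) / |u| = π * |cK| * (b ^ (β - 1) * |u|⁻¹) := by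
      rw [div_eq_mul_inv]; ring
    rw [e] at a a'
    have p : 0 ≤ b ^ (β - 1) * |u|⁻¹ := by positivity
    have q : 0 ≤ |cK| / β * (b ^ (β - 1) * |u|⁻¹) := by positivity
    linarith

/-- Paper's Lemma 4.1 together with the limit relation (4.12). -/
theorem stmt12 (β cK : ℝ) (hβ0 : 0 < β) (hβ1 : β < 1) :
    (∃ C > (0:ℝ), ∀ b : ℝ, 1 ≤ b → ∀ K : ℝ → ℝ,
      (∀ x : ℝ, b < |x| → |K x| ≤ cK * |x| ^ β) →
      AntitoneOn (fun x => K x / x) (Set.Ioi b) →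
      MonotoneOn (fun x => K x / x) (Set.Iio (-b)) →
      ∃ φ : ℝ → ℂ,
        (∀ u : ℝ, u ≠ 0 → Filter.Tendsto (fun n : ℕ =>
            ((1 / (2 * Real.pi) : ℝ) : ℂ) * ∫ x : ℝ,
              Complex.exp (-(Complex.I * (x : ℂ) * (u : ℂ))) *
                (((if b < |x| ∧ |x| ≤ (n : ℝ) then K x else 0) / x : ℝ) : ℂ))
          Filter.atTop (nhds (φ u))) ∧
        (∀ u : ℝ, 0 < |u| → |u| < 1 / b → ‖φ u‖ ≤ C * |u| ^ (-β)) ∧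
        (∀ u : ℝ, u ≠ 0 → ‖φ u‖ ≤ C * b ^ (β - 1) * |u|⁻¹)) ∧
    (∀ b : ℝ, 1 ≤ b → ∀ K : ℝ → ℝ,
      (∀ x : ℝ, b < |x| → |K x| ≤ cK * |x| ^ β) →
      AntitoneOn (fun x => K x / x) (Set.Ioi b) →
      MonotoneOn (fun x => K x / x) (Set.Iio (-b)) →
      ∃ C' > (0:ℝ), ∀ n : ℕ, ∀ u : ℝ,
        (0 < |u| → |u| < 1 / b →
          ‖((1 / (2 * Real.pi) : ℝ) : ℂ) * ∫ x : ℝ,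
              Complex.exp (-(Complex.I * (x : ℂ) * (u : ℂ))) *
                (((if b < |x| ∧ |x| ≤ (n : ℝ) then K x else 0) / x : ℝ) : ℂ)‖
            ≤ C' * |u| ^ (-β)) ∧
        (u ≠ 0 →
          ‖((1 / (2 * Real.pi) : ℝ) : ℂ) * ∫ x : ℝ,
              Complex.exp (-(Complex.I * (x : ℂ) * (u : ℂ))) *
                (((if b < |x| ∧ |x| ≤ (n : ℝ) then K x else 0) / x : ℝ) : ℂ)‖
            ≤ C' * |u|⁻¹)) := by
  have hCpos : 0 < 2 * (|cK| / β + π * |cK|) + 1 := by positivity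
  constructor
  · refine ⟨2 * (|cK| / β + π * |cK|) + 1, hCpos, fun b hb K hK h1 h2 => ?_⟩
    have hb0 : 0 < b := by linarith
    obtain ⟨H1, H2⟩ := HG_K hβ1 hb K hK h1 h2
    have hlim : ∀ u : ℝ, ∃ l : ℂ, u ≠ 0 → Filter.Tendsto (fun n : ℕ =>
            ((1 / (2 * Real.pi) : ℝ) : ℂ) * ∫ x : ℝ,
              Complex.exp (-(Complex.I * (x : ℂ) * (u : ℂ))) *
                (((if b < |x| ∧ |x| ≤ (n : ℝ) then K x else 0) / x : ℝ) : ℂ))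
          Filter.atTop (nhds l) := by
      intro u
      by_cases hu : u = 0
      · exact ⟨0, fun h => absurd hu h⟩
      obtain ⟨l, hl⟩ := Jlim H1 hβ1 (abs_nonneg cK) hb0 u hu
      obtain ⟨l', hl'⟩ := Jlim H2 hβ1 (abs_nonneg cK) hb0 (-u) (neg_ne_zero.mpr hu)
      refine ⟨((1 / (2 * Real.pi) : ℝ) : ℂ) * (l + l'), fun _ => ?_⟩
      have := (hl.add hl').const_mul ((1 / (2 * Real.pi) : ℝ) : ℂ)
      refine this.congr fun n => ?_
      rw [full hβ1 (abs_nonneg cK) hb0 K H1 H2]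
    choose φ hφ using hlim
    refine ⟨φ, hφ, ?_, ?_⟩
    · intro u hu hub
      have hu0 := abs_pos.mp hu
      exact le_of_tendsto (hφ u hu0).norm (Eventually.of_forall fun n =>
        (bounds hβ0 hβ1 hb K hK h1 h2 n u hu0).1 hub)
    · intro u hu0
      exact le_of_tendsto (hφ u hu0).norm (Eventually.of_forall fun n =>
        (bounds hβ0 hβ1 hb K hK h1 h2 n u hu0).2)
  · intro b hb K hK h1 h2
    refine ⟨2 * (|cK| / β + π * |cK|) + 1, hCpos, fun n u => ⟨fun hu hub => ?_, fun hu => ?_⟩⟩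
    · exact (bounds hβ0 hβ1 hb K hK h1 h2 n u (abs_pos.mp hu)).1 hub
    · refine (bounds hβ0 hβ1 hb K hK h1 h2 n u hu).2.trans ?_
      have : b ^ (β - 1) ≤ 1 := Real.rpow_le_one_of_one_le_of_nonpos hb (by linarith)
      have h3 := mul_le_of_le_one_right hCpos.le this
      exact mul_le_mul_of_nonneg_right h3 (by positivity)
end
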